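/- Let n ≥ 1, Q = 2n+2, and suppose 1 < p < ∞, 1 < q' < ∞, q is the Hölder conjugate of q' (1/q + 1/q' = 1), p' is the Hölder conjugate of p, 0 < λ < Q, α + β ≥ 0, λ + α + β ≤ Q, β < 2n/p', α < 2n/q, 1/p + 1/q' + (λ+α+β)/Q = 2, and q > p. Let C = sup{ ‖I_λ(g)(u)·|z|^{-α}‖_{L^q(ℍⁿ)} : g ≥ 0, ‖g(v)·|z'|^{β}‖_{L^p(ℍⁿ)} = 1 } (where u=(z,t), v=(z',t')), and let (g_i) be nonnegative with ‖g_i(v)·|z'|^{β}‖_{L^p(ℍⁿ)} = 1, ‖I_λ(g_i)(u)·|z|^{-α}‖_{L^q(ℍⁿ)} → C, and ∫_{B_ℍ(0,1)} |g_i|^p |z'|^{βp} dv = sup_{t∈ℝ} ∫_{B_ℍ((0,t),1)} |g_i|^p |z'|^{βp} dv = 1/2 for all i. Set μ_i = |g_i|^p |z'|^{βp} dv. Then: (i) there exist v_i ∈ ℍⁿ such that for every ε > 0 there is R_ε > 0 with μ_i(B_ℍ(v_i,R_ε)) ≥ 1 − ε for all i; and (ii) any weak-* limit μ of a subsequence of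 (μ_i) satisfies μ(ℍⁿ) = 1. -/

import Mathlib

open MeasureTheory ENNReal Filter

noncomputable section

/-- The Heisenberg group `ℍⁿ = ℂⁿ × ℝ` (as a measure space, with Lebesgue/Haar measure). -/
abbrev Hn (n : ℕ) := (Fin n → ℂ) × ℝ

/-- Euclidean norm of the `ℂⁿ` component. -/
def znorm {n : ℕ} (z : Fin n → ℂ) : ℝ := Real.sqrt (∑ j, Complex.normSq (z j))

/-- Homogeneous norm `|u| = (|z|⁴ + t²)^{1/4}` on the Heisenberg group. -/
def Hnorm {n : ℕ} (u : Hn n) : ℝ := (znorm u.1 ^ 4 + u.2 ^ 2) ^ ((1 : ℝ)/4)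

/-- Heisenberg group law `(z,t)·(z',t') = (z+z', t+t'+2 Im (z ⬝ conj z'))`. -/
def Hmul {n : ℕ} (u v : Hn n) : Hn n :=
  (u.1 + v.1, u.2 + v.2 + 2 * (∑ j, u.1 j * (starRingEnd ℂ) (v.1 j)).im)

/-- Heisenberg group inverse `(z,t)⁻¹ = (-z,-t)`. -/
def Hinv {n : ℕ} (u : Hn n) : Hn n := (-u.1, -u.2)

/-- Left-invariant quasi-distance `d(u,v) = |u⁻¹ v|`. -/
def Hdist {n : ℕ} (u v : Hn n) : ℝ := Hnorm (Hmul (Hinv u) v)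

/-- Heisenberg ball `B_ℍ(u,R)`. -/
def Hball {n : ℕ} (u : Hn n) (R : ℝ) : Set (Hn n) := {v | Hdist u v < R}

/-- Fractional integral operator `I_λ(g)(u) = ∫ g(v)/|u⁻¹v|^λ dv`. -/
def Ilam {n : ℕ} (lam : ℝ) (g : Hn n → ℝ) (u : Hn n) : ℝ :=
  ∫ v, g v / Hdist u v ^ lam

/-- The measure `|g(v)|^p |z'|^{βp} dv` on the Heisenberg group, `v = (z',t')`. -/
def muWDz {n : ℕ} (p β : ℝ) (g : Hn n → ℝ) : Measure (Hn n) :=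
  volume.withDensity (fun v => ENNReal.ofReal (|g v| ^ p * znorm v.1 ^ (β * p)))

/-- The best constant of the Stein–Weiss inequality with horizontal (`|z|`) weights. -/
def SWbestConstHorizontal (n : ℕ) (p q lam α β : ℝ) : ℝ≥0∞ :=
  sSup { c : ℝ≥0∞ | ∃ g : Hn n → ℝ, Measurable g ∧ (∀ v, 0 ≤ g v) ∧
    eLpNorm (fun v => g v * znorm v.1 ^ β) (ENNReal.ofReal p) volume = 1 ∧
    c = eLpNorm (fun u => Ilam lam g u * znorm u.1 ^ (-α)) (ENNReal.ofReal q) volume }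

/-!
The best constant `C` is finite: after moving the weights to the measure `|z|^{-2n} dz dt`, the
kernel `|z|^a |z'|^b d(u, v)^{-λ}` is of weak type `r` in each variable separately, where
`1 / r = 1 / q + 1 / p'`, and the weak Young inequality applies.

Suppose that `g` carries mass at least `δ` both in the unit ball and outside a ball of huge radius.
By pigeonhole some annulus `ρ^{2m} ≤ |v| < ρ^{2m+2}` in between carries little mass. The potentials
of the parts of `g` inside and outside this annulus have, up to an error decaying with `ρ`, disjoint
supports, so with `a` and `b` the masses of the two parts the norm of the potential of `g` is at
most `C (a^{q/p} + b^{q/p})^{1/q}` plus small errors. As `q > p`, this is at most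
`C (1 - δ)^{(q/p - 1)/q} < C`, plus small errors. Hence a maximizing sequence which keeps mass in
the unit ball is tight, and weak-* limits of tight sequences do not lose mass.
-/

/-! ### Weak-type functions and Kolmogorov's inequality -/

section WeakType

variable {X Y : Type*} [MeasurableSpace X] [MeasurableSpace Y]

lemma lintegral_Ioc_rpow {e S : ℝ} (he : -1 < e) (hS : 0 ≤ S) :
    ∫⁻ b in Set.Ioc (0 : ℝ) S, ENNReal.ofReal (b ^ e) =
      ENNReal.ofReal (S ^ (e + 1) / (e + 1)) := by
  have hint := intervalIntegral.intervalIntegrable_rpow' (a := 0) (b := S) he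
  rw [intervalIntegrable_iff_integrableOn_Ioc_of_le hS] at hint
  rw [← ofReal_integral_eq_lintegral_ofReal hint, ← intervalIntegral.integral_of_le hS,
    integral_rpow (Or.inl he), Real.zero_rpow (by linarith), sub_zero]
  filter_upwards [ae_restrict_mem measurableSet_Ioc] with x hx
  exact Real.rpow_nonneg hx.1.le _

lemma lintegral_Ioi_rpow {e S : ℝ} (he : e < -1) (hS : 0 < S) :
    ∫⁻ b in Set.Ioi S, ENNReal.ofReal (b ^ e) =
      ENNReal.ofReal (-S ^ (e + 1) / (e + 1)) := by
  rw [← ofReal_integral_eq_lintegral_ofReal (integrableOn_Ioi_rpow_of_lt he hS),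
    integral_Ioi_rpow_of_lt he hS]
  filter_upwards [ae_restrict_mem measurableSet_Ioi] with x hx
  exact Real.rpow_nonneg (hS.le.trans (le_of_lt hx)) _

/-- `k` belongs to weak `L^r(ν)` with quasi-norm at most `M ^ (1 / r)`. It is used for nonnegative
functions only, so no absolute value is taken. -/
def IsWeakType (ν : Measure Y) (M r : ℝ) (k : Y → ℝ) : Prop :=
  ∀ c : ℝ, 0 < c → ν {y | c < k y} ≤ ENNReal.ofReal (M * c ^ (-r))

lemma IsWeakType.mono {ν : Measure Y} {M M' r : ℝ} {k : Y → ℝ} (hk : IsWeakType ν M r k)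
    (hM : M ≤ M') : IsWeakType ν M' r k :=
  fun c hc ↦ (hk c hc).trans (by gcongr)

/-- The sublevel sets of the gauge `N` have at most `D`-dimensional volume growth for `ν`. -/
def HasVolumeGrowth (ν : Measure Y) (N : Y → ℝ) (V D : ℝ) : Prop :=
  ∀ ρ : ℝ, 0 < ρ → ν {y | N y < ρ} ≤ ENNReal.ofReal (V * ρ ^ D)

lemma mul_add_rpow_eq_kolmogorov_const {M r b : ℝ} (hM : 0 < M) (hr : 1 < r) (hb : 0 < b) :
    b * (M / b) ^ (1 / r) + M * (-((M / b) ^ (1 / r)) ^ (-r + 1) / (-r + 1)) =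
      M ^ (1 / r) * (r / (r - 1)) * b ^ (1 - 1 / r) := by
  have hr1 : 0 < r - 1 := by linarith
  set c := (M / b) ^ (1 / r) with hc
  have hc0 : 0 < c := by positivity
  have hcpow : c ^ (-r + 1) = b / M * c := by
    rw [Real.rpow_add hc0, Real.rpow_one, hc, ← Real.rpow_mul (by positivity),
      show 1 / r * -r = -1 by field_simp, Real.rpow_neg_one, inv_div]
  have hbc : b * c = M ^ (1 / r) * b ^ (1 - 1 / r) := by
    rw [hc, Real.div_rpow hM.le hb.le, Real.rpow_sub hb, Real.rpow_one]
    field_simp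
  calc b * c + M * (-c ^ (-r + 1) / (-r + 1))
      = b * c * (r / (r - 1)) := by
        rw [hcpow, show -r + 1 = -(r - 1) by ring, neg_div_neg_eq]
        field_simp
        ring
    _ = _ := by rw [hbc]; ring

/-- Kolmogorov's inequality. Optimal height in the layer cake formula: `(M / ν B) ^ (1 / r)`. -/
lemma IsWeakType.setLIntegral_le {ν : Measure Y} {M r : ℝ} {k : Y → ℝ} (hk : IsWeakType ν M r k)
    (hkm : Measurable k) (hk0 : ∀ y, 0 ≤ k y) (hM : 0 < M) (hr : 1 < r) (B : Set Y) :
    ∫⁻ y in B, ENNReal.ofReal (k y) ∂ν ≤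
      ENNReal.ofReal (M ^ (1 / r) * (r / (r - 1))) * ν B ^ (1 - 1 / r) := by
  have : 0 < r - 1 := by linarith
  have hC : 0 < M ^ (1 / r) * (r / (r - 1)) := by positivity
  rcases eq_or_ne (ν B) 0 with h0 | h0
  · simp [Measure.restrict_eq_zero.2 h0]
  rcases eq_or_ne (ν B) ∞ with ht | ht
  · have hexp : 0 < 1 - 1 / r := by
      rw [sub_pos, div_lt_one (by linarith)]
      exact hr
    rw [ht, ENNReal.top_rpow_of_pos hexp, ENNReal.mul_top (by simpa using hC)]
    exact le_top
  obtain ⟨b, hb0, hb⟩ : ∃ b : ℝ, 0 < b ∧ ν B = ENNReal.ofReal b :=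
    ⟨_, ENNReal.toReal_pos h0 ht, (ENNReal.ofReal_toReal ht).symm⟩
  set c := (M / b) ^ (1 / r) with hc
  have hc0 : 0 < c := by positivity
  have hlow : ∫⁻ t in Set.Ioc 0 c, (ν.restrict B) {a | t < k a} ≤ ENNReal.ofReal (b * c) :=
    calc _ ≤ ∫⁻ _ in Set.Ioc 0 c, ν B :=
          lintegral_mono fun _ ↦ (measure_mono (Set.subset_univ _)).trans (by simp)
      _ = _ := by simp [hb, ENNReal.ofReal_mul hb0.le]
  have hhigh : ∫⁻ t in Set.Ioi c, (ν.restrict B) {a | t < k a} ≤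
      ENNReal.ofReal (M * (-c ^ (-r + 1) / (-r + 1))) :=
    calc _ ≤ ∫⁻ t in Set.Ioi c, ENNReal.ofReal M * ENNReal.ofReal (t ^ (-r)) := by
          refine setLIntegral_mono' measurableSet_Ioi fun t ht ↦ ?_
          rw [← ENNReal.ofReal_mul hM.le]
          exact (Measure.restrict_apply_le _ _).trans (hk t (hc0.trans ht))
      _ = _ := by
          rw [lintegral_const_mul _ (by fun_prop), lintegral_Ioi_rpow (by linarith) hc0,
            ENNReal.ofReal_mul hM.le]
  have hnonneg : 0 ≤ M * (-c ^ (-r + 1) / (-r + 1)) := by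
    rw [show -r + 1 = -(r - 1) by ring, neg_div_neg_eq]
    positivity
  rw [lintegral_eq_lintegral_meas_lt _ (.of_forall hk0) hkm.aemeasurable,
    ← Set.Ioc_union_Ioi_eq_Ioi hc0.le]
  refine (lintegral_union_le _ _ _).trans ((add_le_add hlow hhigh).trans_eq ?_)
  rw [← ENNReal.ofReal_add (by positivity) hnonneg, hb, ENNReal.ofReal_rpow_of_pos hb0,
    ← ENNReal.ofReal_mul hC.le, hc, mul_add_rpow_eq_kolmogorov_const hM hr hb0]

namespace HasVolumeGrowth

variable {ν : Measure Y} {N : Y → ℝ} {V D a : ℝ}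

lemma isWeakType_rpow_neg (hN : HasVolumeGrowth ν N V D) (hN0 : ∀ y, 0 ≤ N y) (ha : 0 < a) :
    IsWeakType ν V (D / a) (fun y ↦ N y ^ (-a)) := by
  intro c hc
  have hpow : c ^ (-(D / a)) = (c ^ (-(1 / a))) ^ D := by
    rw [← Real.rpow_mul hc.le]
    congr 1
    field_simp
  rw [hpow]
  refine (measure_mono fun y hy ↦ ?_).trans (hN _ (by positivity))
  simp only [Set.mem_ofPred_eq] at hy ⊢
  rcases (hN0 y).eq_or_lt with h | h
  · rw [← h]
    positivity
  have := Real.rpow_lt_rpow_of_neg hc hy (show -(1 / a) < 0 by simpa using ha)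
  rwa [← Real.rpow_mul h.le, show -a * -(1 / a) = 1 by field_simp, Real.rpow_one] at this

lemma exists_setLIntegral_lt_rpow_neg_le (hN : HasVolumeGrowth ν N V D) (hNm : Measurable N)
    (hN0 : ∀ y, 0 ≤ N y) (hV : 0 < V) (ha : a < D) :
    ∃ C : ℝ, 0 < C ∧ ∀ ρ : ℝ, 0 < ρ →
      ∫⁻ y in {y | N y < ρ}, ENNReal.ofReal (N y ^ (-a)) ∂ν ≤
        ENNReal.ofReal (C * ρ ^ (D - a)) := by
  rcases le_or_gt a 0 with ha0 | ha0
  · refine ⟨V, hV, fun ρ hρ ↦ ?_⟩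
    calc ∫⁻ y in {y | N y < ρ}, ENNReal.ofReal (N y ^ (-a)) ∂ν
        ≤ ∫⁻ _ in {y | N y < ρ}, ENNReal.ofReal (ρ ^ (-a)) ∂ν :=
          setLIntegral_mono' (measurableSet_lt hNm measurable_const) fun y hy ↦
            ENNReal.ofReal_le_ofReal (Real.rpow_le_rpow (hN0 y) (le_of_lt hy) (by linarith))
      _ ≤ ENNReal.ofReal (ρ ^ (-a)) * ENNReal.ofReal (V * ρ ^ D) := by
          rw [setLIntegral_const]
          gcongr
          exact hN ρ hρ
      _ = _ := by
          rw [← ENNReal.ofReal_mul (by positivity), sub_eq_add_neg, Real.rpow_add hρ]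
          ring_nf
  · have hr : 1 < D / a := by rwa [one_lt_div ha0]
    have : 0 < D / a - 1 := by linarith
    have hexp : 0 < 1 - 1 / (D / a) := by
      rw [sub_pos, div_lt_one (by linarith)]
      exact hr
    refine ⟨V ^ (1 / (D / a)) * (D / a / (D / a - 1)) * V ^ (1 - 1 / (D / a)), by positivity,
      fun ρ hρ ↦ ?_⟩
    refine ((hN.isWeakType_rpow_neg hN0 ha0).setLIntegral_le (by fun_prop)
      (fun y ↦ Real.rpow_nonneg (hN0 y) _) hV hr _).trans ?_
    grw [hN ρ hρ]
    rw [ENNReal.ofReal_rpow_of_pos (by positivity), ← ENNReal.ofReal_mul (by positivity),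
      Real.mul_rpow hV.le (by positivity), ← Real.rpow_mul hρ.le, ← mul_assoc,
      show D * (1 - 1 / (D / a)) = D - a by
        have : 0 < D := ha0.trans ha
        field_simp]

lemma exists_setLIntegral_ge_rpow_neg_le (hN : HasVolumeGrowth ν N V D) (hNm : Measurable N)
    (hN0 : ∀ y, 0 ≤ N y) (hV : 0 < V) (hD : 0 < D) (ha : D < a) :
    ∃ C : ℝ, 0 < C ∧ ∀ ρ : ℝ, 0 < ρ →
      ∫⁻ y in {y | ρ ≤ N y}, ENNReal.ofReal (N y ^ (-a)) ∂ν ≤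
        ENNReal.ofReal (C * ρ ^ (D - a)) := by
  have ha0 : 0 < a := hD.trans ha
  have hDa : D / a < 1 := by rwa [div_lt_one ha0]
  refine ⟨V / (1 - D / a), div_pos hV (by linarith), fun ρ hρ ↦ ?_⟩
  have hρa : 0 < ρ ^ (-a) := by positivity
  have hlevel (t : ℝ) (ht : t ∈ Set.Ioi (ρ ^ (-a))) :
      (ν.restrict {y | ρ ≤ N y}) {y | t < N y ^ (-a)} = 0 := by
    rw [Measure.restrict_apply (measurableSet_lt measurable_const (by fun_prop)),
      show {y | t < N y ^ (-a)} ∩ {y | ρ ≤ N y} = ∅ from ?_, measure_empty]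
    refine Set.eq_empty_of_forall_notMem fun y ⟨hty, hρy⟩ ↦ not_le_of_gt (α := ℝ) hty ?_
    exact (Real.rpow_le_rpow_of_nonpos hρ hρy (by linarith)).trans (le_of_lt ht)
  rw [lintegral_eq_lintegral_meas_lt _ (.of_forall fun y ↦ Real.rpow_nonneg (hN0 y) _)
    (by fun_prop), ← Set.Ioc_union_Ioi_eq_Ioi hρa.le]
  refine (lintegral_union_le _ _ _).trans ?_
  rw [setLIntegral_congr_fun measurableSet_Ioi hlevel, lintegral_zero, add_zero]
  calc ∫⁻ t in Set.Ioc 0 (ρ ^ (-a)), (ν.restrict {y | ρ ≤ N y}) {y | t < N y ^ (-a)}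
      ≤ ∫⁻ t in Set.Ioc 0 (ρ ^ (-a)), ENNReal.ofReal V * ENNReal.ofReal (t ^ (-(D / a))) := by
        refine setLIntegral_mono' measurableSet_Ioc fun c hc ↦ ?_
        rw [← ENNReal.ofReal_mul hV.le]
        exact (Measure.restrict_apply_le _ _).trans (hN.isWeakType_rpow_neg hN0 ha0 c hc.1)
    _ = _ := by
        rw [lintegral_const_mul _ (by fun_prop), lintegral_Ioc_rpow (by linarith) hρa.le,
          ← ENNReal.ofReal_mul hV.le, ← Real.rpow_mul hρ.le,
          show -a * (-(D / a) + 1) = D - a by field_simp; ring,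
          show -(D / a) + 1 = 1 - D / a by ring]
        ring_nf

end HasVolumeGrowth

end WeakType

/-! ### The weak Young inequality -/

section WeakYoung

variable {X Y : Type*} [MeasurableSpace X] [MeasurableSpace Y] {μ : Measure X} {ν : Measure Y}
  {h : X → ℝ} {f : Y → ℝ} {k : X → Y → ℝ}

lemma lintegral_ofReal_mul_eq_lintegral_setLIntegral (hh : Measurable h) (hh0 : ∀ x, 0 ≤ h x)
    {G : X → ℝ≥0∞} (hG : Measurable G) :
    ∫⁻ x, ENNReal.ofReal (h x) * G x ∂μ =
      ∫⁻ a in Set.Ioi (0 : ℝ), ∫⁻ x in {x | a < h x}, G x ∂μ := by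
  have hlayer := lintegral_eq_lintegral_meas_lt (μ.withDensity G) (.of_forall hh0) hh.aemeasurable
  rw [lintegral_withDensity_eq_lintegral_mul _ hG (by fun_prop)] at hlayer
  simp_rw [mul_comm (ENNReal.ofReal (h _))]
  refine hlayer.trans (lintegral_congr fun a ↦ ?_)
  rw [withDensity_apply _ (measurableSet_lt measurable_const hh)]

lemma meas_lt_le_rpow_neg (hh : Measurable h) {p : ℝ} (hp : 0 < p)
    (hnorm : ∫⁻ x, ENNReal.ofReal (h x ^ p) ∂μ ≤ 1) {a : ℝ} (ha : 0 < a) :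
    μ {x | a < h x} ≤ ENNReal.ofReal (a ^ (-p)) :=
  calc μ {x | a < h x} ≤ μ {x | ENNReal.ofReal (a ^ p) ≤ ENNReal.ofReal (h x ^ p)} :=
        measure_mono fun x hx ↦
          ENNReal.ofReal_le_ofReal (Real.rpow_le_rpow ha.le (le_of_lt hx) hp.le)
    _ ≤ (∫⁻ x, ENNReal.ofReal (h x ^ p) ∂μ) / ENNReal.ofReal (a ^ p) :=
        meas_ge_le_lintegral_div (by fun_prop) (by positivity) ENNReal.ofReal_ne_top
    _ ≤ 1 / ENNReal.ofReal (a ^ p) := by gcongr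
    _ = ENNReal.ofReal (a ^ (-p)) := by
        rw [Real.rpow_neg ha.le, one_div, ENNReal.ofReal_inv_of_pos (by positivity)]

lemma measurable_meas_lt (μ : Measure X) (h : X → ℝ) : Measurable fun a : ℝ ↦ μ {x | a < h x} :=
  Antitone.measurable fun _ _ hab ↦ measure_mono fun _ hx ↦ lt_of_le_of_lt hab hx

lemma lintegral_Ioc_meas_lt_rpow_le (hh : Measurable h) {p θ : ℝ} (hp : 0 < p)
    (hnorm : ∫⁻ x, ENNReal.ofReal (h x ^ p) ∂μ ≤ 1) (hθ : 0 < θ) (hpθ : p * θ < 1)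
    {S : ℝ} (hS : 0 ≤ S) :
    ∫⁻ a in Set.Ioc (0 : ℝ) S, μ {x | a < h x} ^ θ ≤
      ENNReal.ofReal (1 / (1 - p * θ)) * ENNReal.ofReal (S ^ (1 - p * θ)) := by
  have : 0 < 1 - p * θ := by linarith
  calc ∫⁻ a in Set.Ioc (0 : ℝ) S, μ {x | a < h x} ^ θ
      ≤ ∫⁻ a in Set.Ioc (0 : ℝ) S, ENNReal.ofReal (a ^ (-(p * θ))) := by
        refine setLIntegral_mono' measurableSet_Ioc fun a ⟨ha, _⟩ ↦ ?_
        grw [meas_lt_le_rpow_neg hh hp hnorm ha]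
        rw [ENNReal.ofReal_rpow_of_pos (by positivity), ← Real.rpow_mul ha.le, neg_mul]
    _ = _ := by
        rw [lintegral_Ioc_rpow (by linarith) hS, ← ENNReal.ofReal_mul (by positivity),
          show -(p * θ) + 1 = 1 - p * θ by ring]
        ring_nf

lemma lintegral_meas_lt_mul_rpow_le_one (hh : Measurable h) (hh0 : ∀ x, 0 ≤ h x) {s : ℝ}
    (hs : 1 < s) (hnorm : ∫⁻ x, ENNReal.ofReal (h x ^ s) ∂μ ≤ 1) :
    ∫⁻ a in Set.Ioi (0 : ℝ), μ {x | a < h x} * ENNReal.ofReal (a ^ (s - 1)) ≤ 1 := by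
  rw [lintegral_rpow_eq_lintegral_meas_lt_mul μ (.of_forall hh0) hh.aemeasurable
    (by linarith)] at hnorm
  refine (le_mul_of_one_le_left zero_le ?_).trans hnorm
  simpa using ENNReal.ofReal_le_ofReal hs.le

lemma lintegral_Ioi_lintegral_Ioc_meas_lt_le (hh : Measurable h) (hh0 : ∀ x, 0 ≤ h x)
    (hf : Measurable f) {p s θ κ : ℝ} (hp : 0 < p) (hs : 1 < s) (hθ : 0 < θ) (hpθ : p * θ < 1)
    (hκ : κ * (1 - p * θ) = s - 1) (hhnorm : ∫⁻ x, ENNReal.ofReal (h x ^ s) ∂μ ≤ 1)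
    (hfnorm : ∫⁻ y, ENNReal.ofReal (f y ^ p) ∂ν ≤ 1) (c : ℝ≥0∞) :
    ∫⁻ a in Set.Ioi (0 : ℝ), ∫⁻ b in Set.Ioc (0 : ℝ) (a ^ κ),
        c * ν {y | b < f y} ^ θ * μ {x | a < h x} ≤ c * ENNReal.ofReal (1 / (1 - p * θ)) := by
  set K := ENNReal.ofReal (1 / (1 - p * θ))
  have hν := (measurable_meas_lt ν f).pow_const θ
  have hμ := measurable_meas_lt μ h
  calc ∫⁻ a in Set.Ioi (0 : ℝ), ∫⁻ b in Set.Ioc (0 : ℝ) (a ^ κ),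
        c * ν {y | b < f y} ^ θ * μ {x | a < h x}
      ≤ ∫⁻ a in Set.Ioi (0 : ℝ), c * K * (μ {x | a < h x} * ENNReal.ofReal (a ^ (s - 1))) := by
        refine setLIntegral_mono' measurableSet_Ioi fun a (ha : 0 < a) ↦ ?_
        rw [lintegral_mul_const _ (hν.const_mul c), lintegral_const_mul _ hν]
        grw [lintegral_Ioc_meas_lt_rpow_le hf hp hfnorm hθ hpθ (by positivity : 0 ≤ a ^ κ)]
        rw [← Real.rpow_mul ha.le, hκ]
        exact le_of_eq (by ring)
    _ ≤ c * K * 1 := by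
        rw [lintegral_const_mul _ (hμ.fun_mul (by fun_prop))]
        gcongr
        exact lintegral_meas_lt_mul_rpow_le_one hh hh0 hs hhnorm
    _ = c * K := mul_one _

/-- The quadrant is cut along the curve `b = a ^ κ`. -/
lemma lintegral_Ioi_Ioi_le_add {S F G : ℝ → ℝ → ℝ≥0∞} (hG : Measurable (Function.uncurry G))
    (hSF : ∀ a b, S a b ≤ F a b) (hSG : ∀ a b, S a b ≤ G a b) {κ : ℝ} (hκ : 0 < κ) :
    ∫⁻ a in Set.Ioi (0 : ℝ), ∫⁻ b in Set.Ioi (0 : ℝ), S a b ≤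
      (∫⁻ a in Set.Ioi (0 : ℝ), ∫⁻ b in Set.Ioc (0 : ℝ) (a ^ κ), F a b) +
      ∫⁻ b in Set.Ioi (0 : ℝ), ∫⁻ a in Set.Ioc (0 : ℝ) (b ^ κ⁻¹), G a b := by
  set G' : ℝ × ℝ → ℝ≥0∞ := {w | w.1 ≤ w.2 ^ κ⁻¹}.indicator (Function.uncurry G) with hG'
  have hG'm : Measurable G' := hG.indicator (measurableSet_le (by fun_prop) (by fun_prop))
  have hsplit (a : ℝ) (ha : 0 < a) : ∫⁻ b in Set.Ioi (0 : ℝ), S a b ≤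
      (∫⁻ b in Set.Ioc (0 : ℝ) (a ^ κ), F a b) + ∫⁻ b in Set.Ioi (0 : ℝ), G' (a, b) := by
    have haκ : 0 < a ^ κ := by positivity
    calc ∫⁻ b in Set.Ioi (0 : ℝ), S a b
        ≤ (∫⁻ b in Set.Ioc 0 (a ^ κ), S a b) + ∫⁻ b in Set.Ioi (a ^ κ), S a b := by
          rw [← Set.Ioc_union_Ioi_eq_Ioi haκ.le]
          exact lintegral_union_le _ _ _
      _ ≤ (∫⁻ b in Set.Ioc 0 (a ^ κ), F a b) + ∫⁻ b in Set.Ioi (a ^ κ), G' (a, b) := by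
          refine add_le_add (lintegral_mono fun b ↦ hSF a b)
            (setLIntegral_mono' measurableSet_Ioi fun b (hb : a ^ κ < b) ↦ ?_)
          have hab : a ≤ b ^ κ⁻¹ := by
            rw [Real.le_rpow_inv_iff_of_pos ha.le (haκ.trans hb).le hκ]
            exact hb.le
          rw [hG', Set.indicator_of_mem (show (a, b) ∈ {w : ℝ × ℝ | w.1 ≤ w.2 ^ κ⁻¹} from hab)]
          exact hSG a b
      _ ≤ _ := by gcongr
  refine (setLIntegral_mono' measurableSet_Ioi hsplit).trans ?_
  rw [lintegral_add_right _ hG'm.lintegral_prod_right', lintegral_lintegral_swap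
    (f := fun a b ↦ G' (a, b)) hG'm.aemeasurable]
  refine add_le_add_right (lintegral_mono fun b ↦ le_of_eq ?_) _
  rw [← Set.Ioi_inter_Iic, Set.inter_comm, ← Measure.restrict_restrict' measurableSet_Ioi,
    ← lintegral_indicator measurableSet_Iic]
  rfl

lemma setLIntegral_setLIntegral_le_of_isWeakType (hk : Measurable (Function.uncurry k))
    (hk0 : ∀ x y, 0 ≤ k x y) {M r : ℝ} (hM : 0 < M) (hr : 1 < r)
    (hweak : ∀ x, IsWeakType ν M r (k x)) (A : Set X) (B : Set Y) :
    ∫⁻ x in A, ∫⁻ y in B, ENNReal.ofReal (k x y) ∂ν ∂μ ≤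
      ENNReal.ofReal (M ^ (1 / r) * (r / (r - 1))) * ν B ^ (1 - 1 / r) * μ A :=
  calc _ ≤ ∫⁻ _ in A, ENNReal.ofReal (M ^ (1 / r) * (r / (r - 1))) * ν B ^ (1 - 1 / r) ∂μ :=
        lintegral_mono fun x ↦
          (hweak x).setLIntegral_le (hk.comp measurable_prodMk_left) (hk0 x) hM hr B
    _ = _ := setLIntegral_const _ _

variable [SigmaFinite μ] [SigmaFinite ν]

lemma lintegral_mul_lintegral_mul_eq_double_layercake (hk : Measurable (Function.uncurry k))
    (hh : Measurable h) (hh0 : ∀ x, 0 ≤ h x) (hf : Measurable f) (hf0 : ∀ y, 0 ≤ f y) :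
    ∫⁻ x, ENNReal.ofReal (h x) * ∫⁻ y, ENNReal.ofReal (f y) * ENNReal.ofReal (k x y) ∂ν ∂μ =
      ∫⁻ a in Set.Ioi (0 : ℝ), ∫⁻ b in Set.Ioi (0 : ℝ),
        ∫⁻ x in {x | a < h x}, ∫⁻ y in {y | b < f y}, ENNReal.ofReal (k x y) ∂ν ∂μ := by
  have hk' : Measurable fun w : X × Y ↦ ENNReal.ofReal (k w.1 w.2) := hk.ennreal_ofReal
  have hfk : Measurable fun w : X × Y ↦ ENNReal.ofReal (f w.2) * ENNReal.ofReal (k w.1 w.2) :=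
    (hf.comp measurable_snd).ennreal_ofReal.mul hk'
  rw [lintegral_ofReal_mul_eq_lintegral_setLIntegral hh hh0 hfk.lintegral_prod_right']
  refine lintegral_congr fun a ↦ ?_
  calc ∫⁻ x in {x | a < h x}, ∫⁻ y, ENNReal.ofReal (f y) * ENNReal.ofReal (k x y) ∂ν ∂μ
      = ∫⁻ y, ENNReal.ofReal (f y) * ∫⁻ x in {x | a < h x}, ENNReal.ofReal (k x y) ∂μ ∂ν := by
        rw [lintegral_lintegral_swap hfk.aemeasurable]
        exact lintegral_congr fun y ↦
          lintegral_const_mul _ (hk'.comp measurable_prodMk_right)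
    _ = ∫⁻ b in Set.Ioi (0 : ℝ), ∫⁻ y in {y | b < f y}, ∫⁻ x in {x | a < h x},
          ENNReal.ofReal (k x y) ∂μ ∂ν :=
        lintegral_ofReal_mul_eq_lintegral_setLIntegral hf hf0
          (hk'.comp measurable_swap).lintegral_prod_right'
    _ = _ := lintegral_congr fun b ↦
        lintegral_lintegral_swap (hk'.comp measurable_swap).aemeasurable

lemma one_sub_mul_one_sub_one_div_eq {p s r : ℝ} (hp : p ≠ 0) (hsum : 1 / p + 1 / s + 1 / r = 2) :
    1 - p * (1 - 1 / r) = p * (1 - 1 / s) := by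
  rw [show 1 - 1 / r = 1 / p + 1 / s - 1 by linarith]
  linear_combination (-1 : ℝ) * mul_one_div_cancel hp

lemma exists_lintegral_mul_lintegral_mul_le_of_isWeakType (hk : Measurable (Function.uncurry k))
    (hk0 : ∀ x y, 0 ≤ k x y) {p s r M : ℝ} (hp : 1 < p) (hs : 1 < s) (hr : 1 < r) (hM : 0 < M)
    (hsum : 1 / p + 1 / s + 1 / r = 2) (hν : ∀ x, IsWeakType ν M r (k x))
    (hμ : ∀ y, IsWeakType μ M r fun x ↦ k x y) :
    ∃ D : ℝ, 0 < D ∧ ∀ (h : X → ℝ) (f : Y → ℝ), Measurable h → Measurable f →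
      (∀ x, 0 ≤ h x) → (∀ y, 0 ≤ f y) → ∫⁻ x, ENNReal.ofReal (h x ^ s) ∂μ ≤ 1 →
      ∫⁻ y, ENNReal.ofReal (f y ^ p) ∂ν ≤ 1 →
      ∫⁻ x, ENNReal.ofReal (h x) * ∫⁻ y, ENNReal.ofReal (f y) * ENNReal.ofReal (k x y) ∂ν ∂μ ≤
        ENNReal.ofReal D := by
  set C := M ^ (1 / r) * (r / (r - 1))
  set θ := 1 - 1 / r
  have : 0 < r - 1 := by linarith
  have hC : 0 < C := by positivity
  have hθ0 : 0 < θ := sub_pos.2 ((div_lt_one (by linarith)).2 hr)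
  have hp0 : 0 < p := by linarith
  have hs0 : 0 < s := by linarith
  have hpθ : 1 - p * θ = p * (1 - 1 / s) := one_sub_mul_one_sub_one_div_eq hp0.ne' hsum
  have hsθ : 1 - s * θ = s * (1 - 1 / p) :=
    one_sub_mul_one_sub_one_div_eq hs0.ne' (by linarith)
  have hpθ0 : 0 < 1 - p * θ :=
    hpθ ▸ mul_pos hp0 (sub_pos.2 ((div_lt_one hs0).2 hs))
  have hsθ0 : 0 < 1 - s * θ :=
    hsθ ▸ mul_pos hs0 (sub_pos.2 ((div_lt_one hp0).2 hp))
  refine ⟨C * (1 / (1 - p * θ)) + C * (1 / (1 - s * θ)), by positivity, ?_⟩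
  intro h f hh hf hh0 hf0 hhnorm hfnorm
  rw [lintegral_mul_lintegral_mul_eq_double_layercake hk hh hh0 hf hf0,
    ENNReal.ofReal_add (by positivity) (by positivity), ENNReal.ofReal_mul hC.le,
    ENNReal.ofReal_mul hC.le]
  refine (lintegral_Ioi_Ioi_le_add (κ := s / p)
    (F := fun a b ↦ ENNReal.ofReal C * ν {y | b < f y} ^ θ * μ {x | a < h x})
    (G := fun a b ↦ ENNReal.ofReal C * μ {x | a < h x} ^ θ * ν {y | b < f y}) ?_
    (fun a b ↦ setLIntegral_setLIntegral_le_of_isWeakType hk hk0 hM hr hν _ _)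
    (fun a b ↦ ?_) (by positivity)).trans (add_le_add ?_ ?_)
  · exact (measurable_const.mul (((measurable_meas_lt μ h).comp measurable_fst).pow_const θ)).mul
      ((measurable_meas_lt ν f).comp measurable_snd)
  · rw [lintegral_lintegral_swap hk.ennreal_ofReal.aemeasurable]
    exact setLIntegral_setLIntegral_le_of_isWeakType (k := fun y x ↦ k x y)
      (hk.comp measurable_swap) (fun y x ↦ hk0 x y) hM hr hμ _ _
  · refine lintegral_Ioi_lintegral_Ioc_meas_lt_le hh hh0 hf hp0 hs hθ0 (sub_pos.1 hpθ0)
      ?_ hhnorm hfnorm _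
    rw [hpθ]
    field_simp
  · refine lintegral_Ioi_lintegral_Ioc_meas_lt_le hf hf0 hh hs0 hp hθ0 (sub_pos.1 hsθ0)
      ?_ hfnorm hhnorm _
    rw [hsθ]
    field_simp


lemma exists_simpleFunc_lt_lintegral_lt_top {F : X → ℝ≥0∞} {L : ℝ≥0∞} (hL : L < ∫⁻ x, F x ∂μ) :
    ∃ G : SimpleFunc X NNReal, (∀ x, (G x : ℝ≥0∞) ≤ F x) ∧ ∫⁻ x, G x ∂μ < ∞ ∧
      L < ∫⁻ x, G x ∂μ := by
  simp_rw [lintegral_eq_nnreal, lt_iSup_iff] at hL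
  obtain ⟨φ, hφF, hφ⟩ := hL
  rw [← SimpleFunc.lintegral_eq_lintegral] at hφ
  obtain ⟨G, hGφ, hGtop, hG⟩ := SimpleFunc.exists_lt_lintegral_simpleFunc_of_lt_lintegral hφ
  exact ⟨G, fun x ↦ (ENNReal.coe_le_coe.2 (hGφ x)).trans (hφF x), hGtop, hG⟩

/-- For a simple `G ≤ F ^ q` of integral `j`, the test function is `(G / j) ^ (1 / s)`. -/
lemma lintegral_rpow_le_of_forall_lintegral_mul_le {F : X → ℝ≥0∞} {q s : ℝ}
    (hqs : q.HolderConjugate s) {D : ℝ≥0∞}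
    (hD : ∀ h : X → ℝ, Measurable h → (∀ x, 0 ≤ h x) → ∫⁻ x, ENNReal.ofReal (h x ^ s) ∂μ ≤ 1 →
      ∫⁻ x, ENNReal.ofReal (h x) * F x ∂μ ≤ D) :
    ∫⁻ x, F x ^ q ∂μ ≤ D ^ q := by
  by_contra! hlt
  obtain ⟨G, hGF, hGtop, hDG⟩ := exists_simpleFunc_lt_lintegral_lt_top hlt
  set J := ∫⁻ x, G x ∂μ with hJ
  have hJ0 : J ≠ 0 := (zero_le.trans_lt hDG).ne'
  obtain ⟨j, hj⟩ : ∃ j : NNReal, J = j := ⟨J.toNNReal, (ENNReal.coe_toNNReal hGtop.ne).symm⟩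
  have hj0 : j ≠ 0 := by simpa [hj] using hJ0
  have hs0 : 0 < s := hqs.symm.pos
  have hGm : Measurable fun x ↦ (G x : ℝ≥0∞) := G.measurable.coe_nnreal_ennreal
  have htest (x : X) : ENNReal.ofReal (((G x / j) ^ s⁻¹ : NNReal) : ℝ) =
      (G x : ℝ≥0∞) ^ s⁻¹ * J⁻¹ ^ s⁻¹ := by
    rw [ENNReal.ofReal_coe_nnreal, ENNReal.coe_rpow_of_nonneg _ (by positivity),
      ENNReal.coe_div hj0, ← hj, div_eq_mul_inv, ENNReal.mul_rpow_of_nonneg _ _ (by positivity)]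
  have hle := hD (fun x ↦ ((G x / j) ^ s⁻¹ : NNReal)) (by fun_prop) (fun _ ↦ NNReal.coe_nonneg _) ?_
  · have hJD : J * J⁻¹ ^ s⁻¹ ≤ D := by
      refine le_trans ?_ hle
      rw [hJ, ← lintegral_mul_const _ hGm]
      refine lintegral_mono fun x ↦ ?_
      calc (G x : ℝ≥0∞) * J⁻¹ ^ s⁻¹ = (G x : ℝ≥0∞) ^ s⁻¹ * J⁻¹ ^ s⁻¹ * (G x : ℝ≥0∞) ^ q⁻¹ := by
            rw [mul_right_comm, ← ENNReal.rpow_add_of_nonneg _ _ (by positivity)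
              (inv_nonneg.2 hqs.nonneg), add_comm s⁻¹, hqs.inv_add_inv_eq_one, ENNReal.rpow_one]
        _ ≤ _ := by
            rw [← htest]
            gcongr
            exact (ENNReal.rpow_inv_le_iff hqs.pos).2 (hGF x)
    rw [ENNReal.inv_rpow, ← ENNReal.rpow_neg] at hJD
    nth_rewrite 1 [← ENNReal.rpow_one J] at hJD
    rw [← ENNReal.rpow_add _ _ hJ0 hGtop.ne, ← sub_eq_add_neg, hqs.symm.one_sub_inv,
      ENNReal.rpow_inv_le_iff hqs.pos] at hJD
    exact hDG.not_ge hJD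
  · have hpow (x : X) : ENNReal.ofReal ((((G x / j) ^ s⁻¹ : NNReal) : ℝ) ^ s) = G x * J⁻¹ := by
      rw [← ENNReal.ofReal_rpow_of_nonneg (NNReal.coe_nonneg _) hs0.le, htest,
        ← ENNReal.mul_rpow_of_nonneg _ _ (by positivity), ENNReal.rpow_inv_rpow hs0.ne']
    simp_rw [hpow]
    rw [lintegral_mul_const _ hGm, ENNReal.mul_inv_cancel hJ0 hGtop.ne]

lemma exists_lintegral_rpow_le_of_isWeakType (hk : Measurable (Function.uncurry k))
    (hk0 : ∀ x y, 0 ≤ k x y) {p q s r M : ℝ} (hp : 1 < p) (hqs : q.HolderConjugate s)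
    (hr : 1 < r) (hM : 0 < M) (hsum : 1 / p + 1 / s + 1 / r = 2)
    (hν : ∀ x, IsWeakType ν M r (k x)) (hμ : ∀ y, IsWeakType μ M r fun x ↦ k x y) :
    ∃ D : ℝ, ∀ f : Y → ℝ≥0∞, Measurable f → ∫⁻ y, f y ^ p ∂ν ≤ 1 →
      ∫⁻ x, (∫⁻ y, f y * ENNReal.ofReal (k x y) ∂ν) ^ q ∂μ ≤ ENNReal.ofReal D ^ q := by
  obtain ⟨D, -, hD⟩ := exists_lintegral_mul_lintegral_mul_le_of_isWeakType hk hk0 hp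
    hqs.symm.lt hr hM hsum hν hμ
  have hp0 : 0 < p := by linarith
  refine ⟨D, fun f hf hfnorm ↦ ?_⟩
  have hfin : ∀ᵐ y ∂ν, ENNReal.ofReal (f y).toReal = f y := by
    filter_upwards [ae_lt_top (hf.pow_const p) (hfnorm.trans_lt one_lt_top).ne] with y hy
    exact ENNReal.ofReal_toReal ((ENNReal.rpow_lt_top_iff_of_pos hp0).1 hy).ne
  have hconv (x : X) : ∫⁻ y, f y * ENNReal.ofReal (k x y) ∂ν =
      ∫⁻ y, ENNReal.ofReal (f y).toReal * ENNReal.ofReal (k x y) ∂ν :=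
    lintegral_congr_ae (hfin.mono fun y hy ↦ by simp only [hy])
  simp_rw [hconv]
  refine lintegral_rpow_le_of_forall_lintegral_mul_le hqs fun h hh hh0 hhnorm ↦
    hD h _ hh hf.ennreal_toReal hh0 (fun _ ↦ ENNReal.toReal_nonneg) hhnorm (hfnorm.trans_eq' ?_)
  refine lintegral_congr_ae (hfin.mono fun y hy ↦ ?_)
  simp only [← ENNReal.ofReal_rpow_of_nonneg ENNReal.toReal_nonneg hp0.le, hy]

end WeakYoung

/-! ### Geometry of the homogeneous norm -/

section Geometry

variable {n : ℕ}

lemma znorm_eq_norm_toLp (z : Fin n → ℂ) : znorm z = ‖WithLp.toLp 2 z‖ := by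
  simp [znorm, EuclideanSpace.norm_eq, Complex.normSq_eq_norm_sq]

lemma znorm_nonneg (z : Fin n → ℂ) : 0 ≤ znorm z := Real.sqrt_nonneg _

lemma znorm_add_le (z w : Fin n → ℂ) : znorm (z + w) ≤ znorm z + znorm w := by
  simpa only [znorm_eq_norm_toLp, WithLp.toLp_add] using norm_add_le _ _

lemma znorm_neg (z : Fin n → ℂ) : znorm (-z) = znorm z := by
  simp only [znorm_eq_norm_toLp, WithLp.toLp_neg, norm_neg]

lemma znorm_sub_comm (z w : Fin n → ℂ) : znorm (z - w) = znorm (w - z) := by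
  rw [← znorm_neg, neg_sub]

lemma norm_le_znorm (z : Fin n → ℂ) : ‖z‖ ≤ znorm z := by
  rw [pi_norm_le_iff_of_nonneg (znorm_nonneg z), znorm_eq_norm_toLp]
  exact PiLp.norm_apply_le (WithLp.toLp 2 z)

lemma znorm_pos {z : Fin n → ℂ} (hz : z ≠ 0) : 0 < znorm z :=
  (norm_pos_iff.2 hz).trans_le (norm_le_znorm z)

@[fun_prop]
lemma continuous_znorm : Continuous (znorm (n := n)) := by
  have := Complex.continuous_normSq
  unfold znorm
  fun_prop

@[fun_prop]
lemma measurable_znorm : Measurable (znorm (n := n)) := continuous_znorm.measurable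

lemma sum_mul_conj_eq_inner (z w : Fin n → ℂ) :
    ∑ j, z j * (starRingEnd ℂ) (w j) = inner ℂ (WithLp.toLp 2 w) (WithLp.toLp 2 z) := by
  simp [PiLp.inner_apply]

lemma Hnorm_nonneg (u : Hn n) : 0 ≤ Hnorm u := by
  unfold Hnorm
  positivity

lemma Hnorm_pow_four (u : Hn n) : Hnorm u ^ 4 = znorm u.1 ^ 4 + u.2 ^ 2 := by
  rw [Hnorm, ← Real.rpow_natCast, ← Real.rpow_mul (by positivity)]
  norm_num

lemma Hnorm_sq_eq_norm (u : Hn n) : Hnorm u ^ 2 = ‖(↑(znorm u.1 ^ 2) + u.2 * Complex.I : ℂ)‖ := by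
  rw [Complex.norm_add_mul_I, eq_comm, Real.sqrt_eq_iff_mul_self_eq (by positivity) (by positivity)]
  linear_combination -Hnorm_pow_four u

lemma znorm_le_Hnorm (u : Hn n) : znorm u.1 ≤ Hnorm u := by
  refine le_of_pow_le_pow_left₀ four_ne_zero (Hnorm_nonneg u) ?_
  rw [Hnorm_pow_four]
  exact le_add_of_nonneg_right (sq_nonneg _)

lemma abs_snd_le_Hnorm_sq (u : Hn n) : |u.2| ≤ Hnorm u ^ 2 := by
  rw [Hnorm_sq_eq_norm]
  convert! Complex.abs_im_le_norm _ using 2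
  simp [-Complex.ofReal_pow]

/-- Cygan's inequality. With `ζ u = |z|² + it` one has `|u|² = ‖ζ u‖` and
`ζ (u · v) = ζ u + ζ v + 2 ⟨z, z'⟩`. -/
lemma Hnorm_Hmul_le (u v : Hn n) : Hnorm (Hmul u v) ≤ Hnorm u + Hnorm v := by
  refine le_of_sq_le_sq ?_ (add_nonneg (Hnorm_nonneg u) (Hnorm_nonneg v))
  set w := inner ℂ (WithLp.toLp 2 v.1) (WithLp.toLp 2 u.1) with hw
  have hw_le : ‖w‖ ≤ Hnorm u * Hnorm v := by
    refine (norm_inner_le_norm _ _).trans ?_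
    rw [← znorm_eq_norm_toLp, ← znorm_eq_norm_toLp, mul_comm]
    exact mul_le_mul (znorm_le_Hnorm u) (znorm_le_Hnorm v) (znorm_nonneg _) (Hnorm_nonneg u)
  have hz : znorm (u.1 + v.1) ^ 2 = znorm u.1 ^ 2 + znorm v.1 ^ 2 + 2 * w.re := by
    have := norm_add_sq (𝕜 := ℂ) (WithLp.toLp 2 v.1) (WithLp.toLp 2 u.1)
    rw [← WithLp.toLp_add, ← hw, RCLike.re_eq_complex_re] at this
    rw [add_comm u.1, znorm_eq_norm_toLp, znorm_eq_norm_toLp, znorm_eq_norm_toLp, this]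
    ring
  have hgauge : (↑(znorm (Hmul u v).1 ^ 2) + (Hmul u v).2 * Complex.I : ℂ) =
      (↑(znorm u.1 ^ 2) + u.2 * Complex.I) + (↑(znorm v.1 ^ 2) + v.2 * Complex.I) + 2 * w := by
    have : (Hmul u v).2 = u.2 + v.2 + 2 * w.im := by rw [hw, ← sum_mul_conj_eq_inner]; rfl
    rw [this, show (Hmul u v).1 = u.1 + v.1 from rfl, hz]
    push_cast
    linear_combination 2 * Complex.re_add_im w
  calc Hnorm (Hmul u v) ^ 2 ≤ Hnorm u ^ 2 + Hnorm v ^ 2 + 2 * ‖w‖ := by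
        rw [Hnorm_sq_eq_norm, hgauge, Hnorm_sq_eq_norm, Hnorm_sq_eq_norm]
        refine (norm_add₃_le).trans_eq ?_
        simp
    _ ≤ (Hnorm u + Hnorm v) ^ 2 := by linarith [hw_le, add_sq (Hnorm u) (Hnorm v)]

lemma Hmul_Hinv_cancel_left (u v : Hn n) : Hmul u (Hmul (Hinv u) v) = v := by
  ext1
  · simp [Hmul, Hinv]
  · simp [Hmul, Hinv, mul_add, Finset.sum_add_distrib, Complex.mul_conj, ← Complex.ofReal_sum]
    ring

lemma Hnorm_le_Hnorm_add_Hdist (u v : Hn n) : Hnorm v ≤ Hnorm u + Hdist u v := by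
  have := Hnorm_Hmul_le u (Hmul (Hinv u) v)
  rwa [Hmul_Hinv_cancel_left] at this

lemma Hdist_nonneg (u v : Hn n) : 0 ≤ Hdist u v := Hnorm_nonneg _

lemma Hdist_comm (u v : Hn n) : Hdist u v = Hdist v u := by
  have hinv : Hmul (Hinv v) u = Hinv (Hmul (Hinv u) v) := by
    ext1
    · simp [Hmul, Hinv]
    · have := congrArg Complex.im (inner_conj_symm (𝕜 := ℂ) (WithLp.toLp 2 v.1) (WithLp.toLp 2 u.1))
      simp only [Hmul, Hinv, Pi.neg_apply, neg_mul, Finset.sum_neg_distrib, sum_mul_conj_eq_inner,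
        Complex.neg_im, Complex.conj_im] at this ⊢
      linarith
  rw [Hdist, Hdist, hinv]
  simp [Hnorm, Hinv, znorm_neg]

lemma Hdist_zero_left (v : Hn n) : Hdist 0 v = Hnorm v := by
  simp [Hdist, Hmul, Hinv]

lemma Hball_zero_eq (R : ℝ) : Hball (0 : Hn n) R = {v | Hnorm v < R} := by
  simp [Hball, Hdist_zero_left]

lemma znorm_sub_le_Hdist (u v : Hn n) : znorm (v.1 - u.1) ≤ Hdist u v := by
  rw [← neg_add_eq_sub]
  exact znorm_le_Hnorm (Hmul (Hinv u) v)

lemma abs_snd_sub_le_Hdist_sq (u v : Hn n) :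
    |v.2 - (u.2 + 2 * (∑ j, u.1 j * (starRingEnd ℂ) (v.1 j)).im)| ≤ Hdist u v ^ 2 := by
  refine le_of_eq_of_le (congrArg _ ?_) (abs_snd_le_Hnorm_sq (Hmul (Hinv u) v))
  simp only [Hmul, Hinv, Pi.neg_apply, neg_mul, Finset.sum_neg_distrib, Complex.neg_im]
  ring

lemma half_Hnorm_le_Hdist {u v : Hn n} (h : 2 * Hnorm v ≤ Hnorm u) : Hnorm u / 2 ≤ Hdist u v := by
  linarith [Hnorm_le_Hnorm_add_Hdist v u, Hdist_comm u v]

@[fun_prop]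
lemma continuous_Hnorm : Continuous (Hnorm (n := n)) := by
  unfold Hnorm
  exact Continuous.rpow_const (by fun_prop) fun _ ↦ Or.inr (by norm_num)

@[fun_prop]
lemma measurable_Hnorm : Measurable (Hnorm (n := n)) := continuous_Hnorm.measurable

lemma measurable_uncurry_Hdist : Measurable (Function.uncurry (Hdist (n := n))) := by
  refine (continuous_Hnorm.comp ?_).measurable
  unfold Hmul Hinv
  fun_prop

lemma exists_forall_hasVolumeGrowth_znorm_sub (n : ℕ) [NeZero n] :
    ∃ V : ℝ, 0 < V ∧ ∀ w : Fin n → ℂ, HasVolumeGrowth volume (fun z ↦ znorm (z - w)) V (2 * n) := by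
  have hfin : volume (Metric.ball (0 : Fin n → ℂ) 1) ≠ ∞ := measure_ball_lt_top.ne
  refine ⟨(volume (Metric.ball (0 : Fin n → ℂ) 1)).toReal,
    ENNReal.toReal_pos (Metric.measure_ball_pos _ _ one_pos).ne' hfin, fun w ρ hρ ↦ ?_⟩
  calc volume {z : Fin n → ℂ | znorm (z - w) < ρ} ≤ volume (Metric.ball w ρ) := by
        refine measure_mono fun z hz ↦ ?_
        rw [Metric.mem_ball, dist_eq_norm]
        exact (norm_le_znorm _).trans_lt hz
    _ = ENNReal.ofReal (ρ ^ (2 * n)) * volume (Metric.ball (0 : Fin n → ℂ) 1) := by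
        rw [Measure.addHaar_ball _ _ hρ.le, Module.finrank_pi_fintype]
        simp [mul_comm]
    _ = _ := by
        rw [mul_comm, ENNReal.ofReal_mul ENNReal.toReal_nonneg, ENNReal.ofReal_toReal hfin]
        congr 2
        exact_mod_cast (Real.rpow_natCast ρ (2 * n)).symm

end Geometry

/-! ### Weak type of the weighted kernel -/

section Kernel

variable {n : ℕ} {a A B lam r c : ℝ}

/-- The measure `|z|^{-a} dz` on `ℂⁿ`. -/
def horizontalMeasure (n : ℕ) (a : ℝ) : Measure (Fin n → ℂ) :=
  volume.withDensity fun z ↦ ENNReal.ofReal (znorm z ^ (-a))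

instance : SigmaFinite (horizontalMeasure n a) := SigmaFinite.withDensity_ofReal _

/-- The measure `|z|^{-a} dz dt` on `ℍⁿ`. For `a = 2n` its horizontal factor is invariant under
dilations, and the weighted kernel `weightedKernel` is of weak type with respect to it. -/
def weightedMeasure (n : ℕ) (a : ℝ) : Measure (Hn n) := (horizontalMeasure n a).prod volume

instance : SigmaFinite (weightedMeasure n a) := inferInstanceAs (SigmaFinite (Measure.prod _ _))

/-- The kernel `|z|^A |z'|^B d(u,v)^{-λ}` obtained from `d(u,v)^{-λ}` by moving the weights of the
Stein–Weiss inequality into the measure `weightedMeasure n (2 * n) (2 * n)`. -/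
def weightedKernel (A B lam : ℝ) (u v : Hn n) : ℝ :=
  znorm u.1 ^ A * znorm v.1 ^ B * Hdist u v ^ (-lam)

lemma weightedKernel_nonneg (u v : Hn n) : 0 ≤ weightedKernel A B lam u v :=
  mul_nonneg (mul_nonneg (Real.rpow_nonneg (znorm_nonneg _) _)
    (Real.rpow_nonneg (znorm_nonneg _) _)) (Real.rpow_nonneg (Hdist_nonneg _ _) _)

lemma weightedKernel_comm (u v : Hn n) :
    weightedKernel A B lam u v = weightedKernel B A lam v u := by
  rw [weightedKernel, weightedKernel, Hdist_comm, mul_comm (znorm u.1 ^ A)]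

lemma measurable_uncurry_weightedKernel :
    Measurable (Function.uncurry (weightedKernel (n := n) A B lam)) := by
  have := measurable_uncurry_Hdist (n := n)
  unfold weightedKernel Function.uncurry at *
  fun_prop

/-- The radius such that `c < weightedKernel A B lam u v` means
`d(u,v) < kernelRadius A B lam c u z'` for `v = (z', t')`. -/
def kernelRadius (A B lam c : ℝ) (u : Hn n) (z : Fin n → ℂ) : ℝ :=
  (znorm u.1 ^ A * znorm z ^ B / c) ^ lam⁻¹

lemma measurable_kernelRadius (u : Hn n) : Measurable (kernelRadius A B lam c u) := by
  unfold kernelRadius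
  fun_prop

lemma znorm_rpow_mul_rpow_div_nonneg (hc : 0 < c) (u : Hn n) (z : Fin n → ℂ) :
    0 ≤ znorm u.1 ^ A * znorm z ^ B / c := by
  have := znorm_nonneg u.1
  have := znorm_nonneg z
  positivity

lemma kernelRadius_rpow (hlam : 0 < lam) (hc : 0 < c) (u : Hn n) (z : Fin n → ℂ) :
    kernelRadius A B lam c u z ^ (lam * r) =
      znorm u.1 ^ (A * r) * znorm z ^ (B * r) * c ^ (-r) := by
  have hu := znorm_nonneg u.1
  have hz := znorm_nonneg z
  rw [kernelRadius, ← Real.rpow_mul (znorm_rpow_mul_rpow_div_nonneg hc u z),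
    inv_mul_cancel_left₀ hlam.ne', Real.div_rpow (by positivity) hc.le,
    Real.mul_rpow (by positivity) (by positivity), ← Real.rpow_mul hu, ← Real.rpow_mul hz,
    Real.rpow_neg hc.le, div_eq_mul_inv]

lemma Hdist_lt_kernelRadius (hlam : 0 < lam) (hc : 0 < c) {u v : Hn n}
    (h : c < weightedKernel A B lam u v) : Hdist u v < kernelRadius A B lam c u v.1 := by
  have hd : 0 < Hdist u v := by
    refine (Hdist_nonneg u v).lt_of_ne' fun hd ↦ ?_
    rw [weightedKernel, hd, Real.zero_rpow (neg_ne_zero.2 hlam.ne'), mul_zero] at h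
    exact hc.not_gt h
  rw [kernelRadius, Real.lt_rpow_inv_iff_of_pos hd.le (znorm_rpow_mul_rpow_div_nonneg hc u _) hlam,
    lt_div_iff₀' hc, ← lt_div_iff₀ (by positivity), div_eq_mul_inv, ← Real.rpow_neg hd.le]
  exact h

lemma pos_of_pos_kernelRadius (hB : 0 < B) (hlam : 0 < lam) {u : Hn n} {z : Fin n → ℂ}
    (h : 0 < kernelRadius A B lam c u z) : 0 < znorm z := by
  refine (znorm_nonneg z).lt_of_ne' fun hz ↦ h.ne' ?_
  rw [kernelRadius, hz, Real.zero_rpow hB.ne', mul_zero, zero_div,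
    Real.zero_rpow (inv_ne_zero hlam.ne')]

lemma volume_slice_Hball_le (u : Hn n) (z : Fin n → ℂ) (ρ : ℝ) :
    volume {t : ℝ | Hdist u (z, t) < ρ} ≤
      {z | znorm (z - u.1) < ρ}.indicator (fun _ ↦ ENNReal.ofReal (2 * ρ ^ 2)) z := by
  by_cases hz : znorm (z - u.1) < ρ
  · rw [Set.indicator_of_mem (by exact hz),
      ← Real.volume_ball (u.2 + 2 * (∑ j, u.1 j * (starRingEnd ℂ) (z j)).im)]
    refine measure_mono fun t ht ↦ ?_
    rw [Metric.mem_ball, Real.dist_eq]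
    exact (abs_snd_sub_le_Hdist_sq u (z, t)).trans_lt
      (pow_lt_pow_left₀ ht (Hdist_nonneg _ _) two_ne_zero)
  · refine (measure_mono_null (fun t ht ↦ hz ?_) measure_empty).trans_le zero_le
    exact (znorm_sub_le_Hdist u (z, t)).trans_lt ht

lemma weightedMeasure_le_setLIntegral {E : Set (Hn n)} (hE : MeasurableSet E)
    {S : Set (Fin n → ℂ)} (hS : MeasurableSet S) {ρ : (Fin n → ℂ) → ℝ} (hρ : Measurable ρ)
    (u : Hn n) (hES : ∀ v ∈ E, v.1 ∈ S ∧ Hdist u v < ρ v.1) :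
    weightedMeasure n a E ≤ ∫⁻ z in S ∩ {z | znorm (z - u.1) < ρ z},
      ENNReal.ofReal (2 * ρ z ^ 2 * znorm z ^ (-a)) := by
  have hT : MeasurableSet (S ∩ {z | znorm (z - u.1) < ρ z}) :=
    hS.inter (measurableSet_lt (by fun_prop) hρ)
  have hslice (z : Fin n → ℂ) : volume (Prod.mk z ⁻¹' E) ≤
      (S ∩ {z | znorm (z - u.1) < ρ z}).indicator (fun z ↦ ENNReal.ofReal (2 * ρ z ^ 2)) z := by
    by_cases hz : z ∈ S
    · refine (measure_mono fun t (ht : (z, t) ∈ E) ↦ (hES _ ht).2).trans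
        ((volume_slice_Hball_le u z (ρ z)).trans_eq ?_)
      by_cases hzu : znorm (z - u.1) < ρ z <;> simp [Set.indicator, hz, hzu]
    · refine (measure_mono_null (fun t (ht : (z, t) ∈ E) ↦ hz (hES _ ht).1)
        measure_empty).trans_le zero_le
  rw [weightedMeasure, Measure.prod_apply hE]
  refine (lintegral_mono hslice).trans_eq ?_
  rw [lintegral_indicator hT, horizontalMeasure,
    setLIntegral_withDensity_eq_setLIntegral_mul _ (by fun_prop) (by fun_prop) hT]
  refine lintegral_congr fun z ↦ ?_
  rw [Pi.mul_apply, mul_comm, ← ENNReal.ofReal_mul (by positivity)]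

lemma kernelRadius_sq_mul_le (hA : 0 < A) (hB : 0 < B) (hr : 0 < r) (hlam : 0 < lam)
    (hlr : lam * r = A * r + B * r + 2) (hc : 0 < c) {u : Hn n} {z : Fin n → ℂ} {δ : ℝ}
    (hδ : 0 < δ) (h : δ ≤ kernelRadius A B lam c u z) :
    2 * kernelRadius A B lam c u z ^ 2 * znorm z ^ (-(2 * n : ℝ)) ≤
      2 * znorm u.1 ^ (A * r) * c ^ (-r) * δ ^ (-(A * r + B * r)) *
        znorm z ^ (-(2 * n - B * r)) := by
  have hz : 0 < znorm z := pos_of_pos_kernelRadius hB hlam (hδ.trans_le h)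
  have hsq : kernelRadius A B lam c u z ^ 2 ≤
      znorm u.1 ^ (A * r) * znorm z ^ (B * r) * c ^ (-r) * δ ^ (-(A * r + B * r)) := by
    rw [← kernelRadius_rpow hlam hc, ← Real.rpow_two,
      show (2 : ℝ) = lam * r + -(A * r + B * r) by rw [hlr]; ring, Real.rpow_add (hδ.trans_le h)]
    refine mul_le_mul_of_nonneg_left ?_ (Real.rpow_nonneg (hδ.le.trans h) _)
    exact Real.rpow_le_rpow_of_nonpos hδ h (neg_nonpos.2 (by positivity))
  calc _ ≤ 2 * (znorm u.1 ^ (A * r) * znorm z ^ (B * r) * c ^ (-r) * δ ^ (-(A * r + B * r))) *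
        znorm z ^ (-(2 * n : ℝ)) := by gcongr
    _ = _ := by
        rw [show -(2 * n - B * r) = B * r + -(2 * n : ℝ) by ring, Real.rpow_add hz]
        ring

lemma hasVolumeGrowth_znorm {V : ℝ}
    (hV : ∀ w : Fin n → ℂ, HasVolumeGrowth volume (fun z ↦ znorm (z - w)) V (2 * n)) :
    HasVolumeGrowth volume (znorm (n := n)) V (2 * n) := by
  simpa only [sub_zero] using hV 0

lemma measurableSet_lt_weightedKernel (u : Hn n) :
    MeasurableSet {v | c < weightedKernel A B lam u v} :=
  measurableSet_lt measurable_const measurable_uncurry_weightedKernel.of_uncurry_left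

lemma znorm_le_znorm_add_sub (z w : Fin n → ℂ) : znorm w ≤ znorm z + znorm (z - w) := by
  simpa [znorm_sub_comm] using znorm_add_le z (w - z)

lemma exists_weightedMeasure_near_le [NeZero n] (hA : 0 < A) (hB : 0 < B) (hr : 0 < r)
    (hlam : 0 < lam) (hlr : lam * r = A * r + B * r + 2) :
    ∃ M : ℝ, 0 < M ∧ ∀ (u : Hn n) (c : ℝ), 0 < znorm u.1 → 0 < c →
      weightedMeasure n (2 * n)
        ({v | c < weightedKernel A B lam u v} ∩ {v | znorm v.1 < znorm u.1 / 2}) ≤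
        ENNReal.ofReal (M * c ^ (-r)) := by
  obtain ⟨V, hV, hgrowth⟩ := exists_forall_hasVolumeGrowth_znorm_sub n
  obtain ⟨C, hC, hint⟩ := (hasVolumeGrowth_znorm hgrowth).exists_setLIntegral_lt_rpow_neg_le
    measurable_znorm znorm_nonneg hV (a := 2 * n - B * r) (sub_lt_self _ (by positivity))
  refine ⟨2 * C * 2 ^ (A * r), by positivity, fun u c hu hc ↦ ?_⟩
  set ζ := znorm u.1
  set D := 2 * ζ ^ (A * r) * c ^ (-r) * (ζ / 2) ^ (-(A * r + B * r)) with hD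
  have hD0 : 0 ≤ D := by positivity
  have hS : MeasurableSet {z : Fin n → ℂ | znorm z < ζ / 2} :=
    measurableSet_lt measurable_znorm measurable_const
  calc _ ≤ _ := weightedMeasure_le_setLIntegral ((measurableSet_lt_weightedKernel u).inter
        (measurable_fst hS)) hS (measurable_kernelRadius u) u
        fun v hv ↦ ⟨hv.2, Hdist_lt_kernelRadius hlam hc hv.1⟩
    _ ≤ ∫⁻ z in {z : Fin n → ℂ | znorm z < ζ / 2},
          ENNReal.ofReal D * ENNReal.ofReal (znorm z ^ (-(2 * n - B * r))) := by
        refine (setLIntegral_mono (by fun_prop) fun z hz ↦ ?_).trans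
          (lintegral_mono_set Set.inter_subset_left)
        have hz1 : znorm z < ζ / 2 := hz.1
        have hz2 : znorm (z - u.1) < kernelRadius A B lam c u z := hz.2
        rw [← ENNReal.ofReal_mul hD0]
        refine ENNReal.ofReal_le_ofReal
          (kernelRadius_sq_mul_le hA hB hr hlam hlr hc (by positivity) ?_)
        linarith [znorm_le_znorm_add_sub z u.1]
    _ ≤ ENNReal.ofReal D * ENNReal.ofReal (C * (ζ / 2) ^ (2 * n - (2 * n - B * r))) := by
        rw [lintegral_const_mul _ (by fun_prop)]
        gcongr
        exact hint _ (by positivity)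
    _ = _ := by
        rw [← ENNReal.ofReal_mul hD0, hD, _root_.sub_sub_cancel]
        congr 1
        have : (ζ / 2) ^ (-(A * r + B * r)) * (ζ / 2) ^ (B * r) = 2 ^ (A * r) / ζ ^ (A * r) := by
          rw [← Real.rpow_add (by positivity), neg_add, neg_add_cancel_right,
            Real.rpow_neg (by positivity), Real.div_rpow hu.le zero_le_two, inv_div]
        linear_combination (2 * ζ ^ (A * r) * c ^ (-r) * C) * this +
          2 * c ^ (-r) * C * 2 ^ (A * r) * mul_inv_cancel₀ (Real.rpow_pos_of_pos hu (A * r)).ne'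

lemma exists_weightedMeasure_far_le [NeZero n] (hA : 0 < A) (hB : 0 < B) (hr : 0 < r)
    (hlam : 0 < lam) (hlr : lam * r = A * r + B * r + 2) :
    ∃ M : ℝ, 0 < M ∧ ∀ (u : Hn n) (c : ℝ), 0 < znorm u.1 → 0 < c →
      weightedMeasure n (2 * n)
        ({v | c < weightedKernel A B lam u v} ∩ {v | 2 * znorm u.1 ≤ znorm v.1}) ≤
        ENNReal.ofReal (M * c ^ (-r)) := by
  have hn : (0 : ℝ) < 2 * n := by have := NeZero.pos n; positivity
  obtain ⟨V, hV, hgrowth⟩ := exists_forall_hasVolumeGrowth_znorm_sub n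
  obtain ⟨C, hC, hint⟩ := (hasVolumeGrowth_znorm hgrowth).exists_setLIntegral_ge_rpow_neg_le
    measurable_znorm znorm_nonneg hV hn (a := 2 * n + A * r) (lt_add_of_pos_right _ (by positivity))
  refine ⟨2 * 2 ^ (A * r + B * r) * C * 2 ^ (-(A * r)), by positivity, fun u c hu hc ↦ ?_⟩
  set ζ := znorm u.1
  set D := 2 * 2 ^ (A * r + B * r) * ζ ^ (A * r) * c ^ (-r) with hD
  have hD0 : 0 ≤ D := by positivity
  have hS : MeasurableSet {z : Fin n → ℂ | 2 * ζ ≤ znorm z} :=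
    measurableSet_le measurable_const measurable_znorm
  calc _ ≤ _ := weightedMeasure_le_setLIntegral ((measurableSet_lt_weightedKernel u).inter
        (measurable_fst hS)) hS (measurable_kernelRadius u) u
        fun v hv ↦ ⟨hv.2, Hdist_lt_kernelRadius hlam hc hv.1⟩
    _ ≤ ∫⁻ z in {z : Fin n → ℂ | 2 * ζ ≤ znorm z},
          ENNReal.ofReal D * ENNReal.ofReal (znorm z ^ (-(2 * n + A * r))) := by
        refine (setLIntegral_mono (by fun_prop) fun z hz ↦ ?_).trans
          (lintegral_mono_set Set.inter_subset_left)
        have hz1 : 2 * ζ ≤ znorm z := hz.1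
        have hz2 : znorm (z - u.1) < kernelRadius A B lam c u z := hz.2
        have hz0 : 0 < znorm z := by linarith
        rw [← ENNReal.ofReal_mul hD0]
        refine ENNReal.ofReal_le_ofReal ((kernelRadius_sq_mul_le hA hB hr hlam hlr hc
          (half_pos hz0) ?_).trans_eq ?_)
        · linarith [znorm_le_znorm_add_sub u.1 z, znorm_sub_comm z u.1]
        · rw [Real.div_rpow hz0.le zero_le_two, Real.rpow_neg zero_le_two, div_inv_eq_mul, hD,
            show -(2 * n + A * r) = -(A * r + B * r) + -(2 * n - B * r) by ring, Real.rpow_add hz0]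
          ring
    _ ≤ ENNReal.ofReal D * ENNReal.ofReal (C * (2 * ζ) ^ (2 * n - (2 * n + A * r))) := by
        rw [lintegral_const_mul _ (by fun_prop)]
        gcongr
        exact hint _ (by positivity)
    _ = _ := by
        rw [← ENNReal.ofReal_mul hD0, hD, sub_add_cancel_left, Real.mul_rpow zero_le_two hu.le,
          Real.rpow_neg hu.le]
        congr 1
        field_simp

lemma min_rpow_le_mul_rpow {a b θ D : ℝ} (ha : 0 < a) (hb : 0 < b) (hθ : 0 ≤ θ) (hθD : θ ≤ D) :
    min a b ^ D ≤ a ^ θ * b ^ (D - θ) := by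
  have hmin : 0 < min a b := lt_min ha hb
  have : 0 ≤ D - θ := sub_nonneg.2 hθD
  calc min a b ^ D = min a b ^ θ * min a b ^ (D - θ) := by
        rw [← Real.rpow_add hmin, add_sub_cancel]
    _ ≤ a ^ θ * b ^ (D - θ) := by
        gcongr
        exacts [min_le_left _ _, min_le_right _ _]

lemma kernelRadius_le_of_znorm_lt (hB : 0 < B) (hlam : 0 < lam) (hc : 0 < c) {u : Hn n}
    {z : Fin n → ℂ} (hz : znorm z < 2 * znorm u.1) :
    kernelRadius A B lam c u z ≤ (znorm u.1 ^ A * (2 * znorm u.1) ^ B / c) ^ lam⁻¹ := by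
  have hu := znorm_nonneg u.1
  refine Real.rpow_le_rpow (znorm_rpow_mul_rpow_div_nonneg hc u z) ?_ (inv_nonneg.2 hlam.le)
  gcongr
  exact znorm_nonneg z

lemma weightedMeasure_comparable_le {V : ℝ}
    (hgrowth : ∀ w : Fin n → ℂ, HasVolumeGrowth volume (fun z ↦ znorm (z - w)) V (2 * n))
    {E : Set (Hn n)} (hE : MeasurableSet E) {u : Hn n} {τ : ℝ} (hu : 0 < znorm u.1) (hτ : 0 < τ)
    (hEτ : ∀ v ∈ E, znorm u.1 / 2 ≤ znorm v.1 ∧ znorm v.1 < 2 * znorm u.1 ∧ Hdist u v < τ) :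
    weightedMeasure n (2 * n) E ≤ ENNReal.ofReal
      (2 * τ ^ 2 * (znorm u.1 / 2) ^ (-(2 * n : ℝ)) *
        (V * min τ (3 * znorm u.1) ^ (2 * n : ℝ))) := by
  set ζ := znorm u.1
  set S := {z : Fin n → ℂ | ζ / 2 ≤ znorm z ∧ znorm z < 2 * ζ}
  have hS : MeasurableSet S := (measurableSet_le measurable_const measurable_znorm).inter
    (measurableSet_lt measurable_znorm measurable_const)
  calc _ ≤ _ := weightedMeasure_le_setLIntegral hE hS (ρ := fun _ ↦ τ) measurable_const u
        fun v hv ↦ ⟨⟨(hEτ v hv).1, (hEτ v hv).2.1⟩, (hEτ v hv).2.2⟩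
    _ ≤ ∫⁻ _ in S ∩ {z | znorm (z - u.1) < τ},
          ENNReal.ofReal (2 * τ ^ 2 * (ζ / 2) ^ (-(2 * n : ℝ))) := by
        refine setLIntegral_mono measurable_const fun z hz ↦ ENNReal.ofReal_le_ofReal ?_
        refine mul_le_mul_of_nonneg_left ?_ (by positivity)
        exact Real.rpow_le_rpow_of_nonpos (half_pos hu) hz.1.1 (neg_nonpos.2 (by positivity))
    _ ≤ ENNReal.ofReal (2 * τ ^ 2 * (ζ / 2) ^ (-(2 * n : ℝ))) *
          ENNReal.ofReal (V * min τ (3 * ζ) ^ (2 * n : ℝ)) := by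
        rw [setLIntegral_const]
        gcongr
        refine (measure_mono fun z hz ↦ ?_).trans (hgrowth u.1 _ (lt_min hτ (by positivity)))
        have hzu : znorm (z - u.1) ≤ znorm z + ζ := by
          simpa [sub_eq_add_neg, znorm_neg] using znorm_add_le z (-u.1)
        have hz1 : znorm z < 2 * ζ := hz.1.2
        exact lt_min (show znorm (z - u.1) < τ from hz.2) (by linarith)
    _ = _ := (ENNReal.ofReal_mul (by positivity)).symm

lemma exists_weightedMeasure_comparable_le [NeZero n] (hA : 0 < A) (hB : 0 < B) (hr : 0 < r)
    (hlam : 0 < lam) (hlr : lam * r = A * r + B * r + 2) (hABn : A * r + B * r ≤ 2 * n) :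
    ∃ M : ℝ, 0 < M ∧ ∀ (u : Hn n) (c : ℝ), 0 < znorm u.1 → 0 < c →
      weightedMeasure n (2 * n) ({v | c < weightedKernel A B lam u v} ∩
        {v | znorm u.1 / 2 ≤ znorm v.1 ∧ znorm v.1 < 2 * znorm u.1}) ≤
          ENNReal.ofReal (M * c ^ (-r)) := by
  obtain ⟨V, hV, hgrowth⟩ := exists_forall_hasVolumeGrowth_znorm_sub n
  set θ := A * r + B * r with hθ
  refine ⟨2 * 2 ^ (2 * n : ℝ) * V * 3 ^ (2 * n - θ) * 2 ^ (B * r), by positivity,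
    fun u c hu hc ↦ ?_⟩
  set ζ := znorm u.1
  set τ := (ζ ^ A * (2 * ζ) ^ B / c) ^ lam⁻¹ with hτ
  have hτ0 : 0 < τ := by positivity
  refine (weightedMeasure_comparable_le hgrowth ((measurableSet_lt_weightedKernel u).inter
    ?_) hu hτ0 fun v hv ↦ ⟨hv.2.1, hv.2.2, (Hdist_lt_kernelRadius hlam hc hv.1).trans_le
      (kernelRadius_le_of_znorm_lt hB hlam hc hv.2.2)⟩).trans (ENNReal.ofReal_le_ofReal ?_)
  · have hm : Measurable fun v : Hn n ↦ znorm v.1 := by fun_prop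
    exact (measurableSet_le measurable_const hm).inter (measurableSet_lt hm measurable_const)
  have hτ_pow : τ ^ 2 * τ ^ θ = ζ ^ θ * 2 ^ (B * r) * c ^ (-r) := by
    rw [← Real.rpow_two, ← Real.rpow_add hτ0, add_comm, ← hlr, hτ,
      ← Real.rpow_mul (by positivity), inv_mul_cancel_left₀ hlam.ne',
      Real.div_rpow (by positivity) hc.le, Real.mul_rpow (by positivity) (by positivity),
      ← Real.rpow_mul hu.le, ← Real.rpow_mul (by positivity), Real.mul_rpow zero_le_two hu.le,
      Real.rpow_neg hc.le, hθ, Real.rpow_add hu]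
    ring
  calc 2 * τ ^ 2 * (ζ / 2) ^ (-(2 * n : ℝ)) * (V * min τ (3 * ζ) ^ (2 * n : ℝ))
      ≤ 2 * τ ^ 2 * (ζ / 2) ^ (-(2 * n : ℝ)) * (V * (τ ^ θ * (3 * ζ) ^ (2 * n - θ))) := by
        gcongr
        exact min_rpow_le_mul_rpow hτ0 (by positivity) (by positivity) hABn
    _ = 2 * 2 ^ (2 * n : ℝ) * V * 3 ^ (2 * n - θ) * (τ ^ 2 * τ ^ θ) * (ζ ^ θ)⁻¹ := by
        rw [Real.div_rpow hu.le zero_le_two, Real.mul_rpow zero_le_three hu.le,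
          Real.rpow_sub hu, Real.rpow_neg hu.le, Real.rpow_neg zero_le_two]
        field_simp
    _ = _ := by
        rw [hτ_pow]
        field_simp

lemma exists_forall_isWeakType_weightedKernel [NeZero n] (hA : 0 < A) (hB : 0 < B) (hr : 0 < r)
    (hlr : lam * r = A * r + B * r + 2) (hABn : A * r + B * r ≤ 2 * n) :
    ∃ M : ℝ, 0 < M ∧ ∀ u : Hn n,
      IsWeakType (weightedMeasure n (2 * n)) M r (weightedKernel A B lam u) := by
  have hlam : 0 < lam := pos_of_mul_pos_left (by rw [hlr]; positivity) hr.le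
  obtain ⟨M₁, hM₁, hnear⟩ := exists_weightedMeasure_near_le (n := n) hA hB hr hlam hlr
  obtain ⟨M₂, hM₂, hfar⟩ := exists_weightedMeasure_far_le (n := n) hA hB hr hlam hlr
  obtain ⟨M₃, hM₃, hcomp⟩ := exists_weightedMeasure_comparable_le hA hB hr hlam hlr hABn
  refine ⟨M₁ + M₂ + M₃, by positivity, fun u c hc ↦ ?_⟩
  rcases (znorm_nonneg u.1).eq_or_lt with hu | hu
  · have : {v | c < weightedKernel A B lam u v} = ∅ := by
      simp [weightedKernel, ← hu, Real.zero_rpow hA.ne', hc.not_gt]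
    simp [this]
  calc _ ≤ weightedMeasure n (2 * n) (
          {v | c < weightedKernel A B lam u v} ∩ {v | znorm v.1 < znorm u.1 / 2} ∪
          {v | c < weightedKernel A B lam u v} ∩ {v | 2 * znorm u.1 ≤ znorm v.1} ∪
          {v | c < weightedKernel A B lam u v} ∩
            {v | znorm u.1 / 2 ≤ znorm v.1 ∧ znorm v.1 < 2 * znorm u.1}) := by
        refine measure_mono fun v hv ↦ ?_
        rcases lt_or_ge (znorm v.1) (znorm u.1 / 2) with h₁ | h₁
        · exact .inl (.inl ⟨hv, h₁⟩)
        rcases le_or_gt (2 * znorm u.1) (znorm v.1) with h₂ | h₂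
        · exact .inl (.inr ⟨hv, h₂⟩)
        · exact .inr ⟨hv, h₁, h₂⟩
    _ ≤ ENNReal.ofReal (M₁ * c ^ (-r)) + ENNReal.ofReal (M₂ * c ^ (-r)) +
          ENNReal.ofReal (M₃ * c ^ (-r)) := by
        grw [measure_union_le, measure_union_le, hnear u c hu hc, hfar u c hu hc, hcomp u c hu hc]
    _ = _ := by
        rw [← ENNReal.ofReal_add (by positivity) (by positivity),
          ← ENNReal.ofReal_add (by positivity) (by positivity), add_mul, add_mul]

end Kernel

/-! ### The Stein–Weiss inequality -/

section SteinWeiss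

variable {n : ℕ} {p p' q lam α β a b s : ℝ} {G : Hn n → ℝ≥0∞}

/-- The exponents for which the Stein–Weiss inequality on `ℍⁿ` with horizontal weights
`|z|^{-α}`, `|z|^β` is scale invariant from `L^p` to `L^q` and the weights are locally integrable
to the relevant powers. The balance condition is written with `1 / q + 1 / p'`, which is the
reciprocal of the exponent of the weak type of the weighted kernel. -/
structure SteinWeissExponents (n : ℕ) (p p' q lam α β : ℝ) : Prop where
  holderConjugate : p.HolderConjugate p'
  q_pos : 0 < q
  α_lt : α < 2 * n / q
  β_lt : β < 2 * n / p'
  balance : lam + α + β = (2 * n + 2) * (1 / q + 1 / p')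

/-- The horizontal weight `|z|^a`, with values in `ℝ≥0∞`. Like `Real.rpow`, it vanishes on `z = 0`
for `a ≠ 0`, even if `a < 0`. -/
def horWeight (a : ℝ) (v : Hn n) : ℝ≥0∞ := ENNReal.ofReal (znorm v.1 ^ a)

/-- The fractional integral `I_λ` of an `ℝ≥0∞`-valued function. -/
def fracInt (lam : ℝ) (G : Hn n → ℝ≥0∞) (u : Hn n) : ℝ≥0∞ :=
  ∫⁻ v, G v * ENNReal.ofReal (Hdist u v ^ (-lam))

/-- The `L^q` norm of `I_λ(G) |z|^{-α}`. -/
def fracIntNorm (q lam α : ℝ) (G : Hn n → ℝ≥0∞) : ℝ≥0∞ :=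
  (∫⁻ u, (fracInt lam G u * horWeight (-α) u) ^ q) ^ (1 / q)

/-- The measure `G^p |z|^{βp} dv`, which is `muWDz p β g` for `G = g ≥ 0`. -/
def massMeasure (p β : ℝ) (G : Hn n → ℝ≥0∞) : Measure (Hn n) :=
  volume.withDensity fun v ↦ (G v * horWeight β v) ^ p

@[fun_prop]
lemma measurable_horWeight : Measurable (horWeight (n := n) a) := by
  unfold horWeight
  fun_prop

lemma horWeight_ne_zero {v : Hn n} (hv : v.1 ≠ 0) : horWeight a v ≠ 0 :=
  (ENNReal.ofReal_pos.2 (Real.rpow_pos_of_pos (znorm_pos hv) a)).ne'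

lemma horWeight_rpow (hs : 0 ≤ s) (v : Hn n) : horWeight a v ^ s = horWeight (a * s) v := by
  rw [horWeight, horWeight, ENNReal.ofReal_rpow_of_nonneg (Real.rpow_nonneg (znorm_nonneg _) _) hs,
    ← Real.rpow_mul (znorm_nonneg _)]

lemma horWeight_mul_horWeight {v : Hn n} (hv : v.1 ≠ 0) :
    horWeight a v * horWeight b v = horWeight (a + b) v := by
  rw [horWeight, horWeight, horWeight, Real.rpow_add (znorm_pos hv),
    ENNReal.ofReal_mul (Real.rpow_nonneg (znorm_nonneg _) _)]

lemma ae_fst_ne [NeZero n] (w : Fin n → ℂ) : ∀ᵐ v : Hn n, v.1 ≠ w := by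
  have hw : ∀ᵐ z : Fin n → ℂ, z ≠ w := by simp [ae_iff]
  exact Measure.quasiMeasurePreserving_fst.ae hw

lemma measurable_mul_Hdist_rpow (hG : Measurable G) (u : Hn n) :
    Measurable fun v ↦ G v * ENNReal.ofReal (Hdist u v ^ (-lam)) := by
  have : Measurable (Hdist u) := measurable_uncurry_Hdist.of_uncurry_left
  fun_prop

lemma measurable_fracInt (hG : Measurable G) : Measurable (fracInt lam G) := by
  have := measurable_uncurry_Hdist (n := n)
  unfold Function.uncurry at this
  exact Measurable.lintegral_prod_right' (f := fun x : Hn n × Hn n ↦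
    G x.2 * ENNReal.ofReal (Hdist x.1 x.2 ^ (-lam))) (by fun_prop)

lemma lintegral_weightedMeasure {f : Hn n → ℝ≥0∞} (hf : Measurable f) :
    ∫⁻ v, f v ∂weightedMeasure n a = ∫⁻ v, horWeight (-a) v * f v := by
  rw [weightedMeasure, horizontalMeasure, prod_withDensity_left (by fun_prop),
    ← Measure.volume_eq_prod, lintegral_withDensity_eq_lintegral_mul _ (by fun_prop) hf]
  rfl

lemma lintegral_mul_horWeight_rpow_weightedMeasure [NeZero n] (hs : 0 < s) (hG : Measurable G) :
    ∫⁻ v, (G v * horWeight (a + 2 * n / s) v) ^ s ∂weightedMeasure n (2 * n) =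
      ∫⁻ v, (G v * horWeight a v) ^ s := by
  rw [lintegral_weightedMeasure (by fun_prop)]
  refine lintegral_congr_ae ?_
  filter_upwards [ae_fst_ne 0] with v hv
  rw [ENNReal.mul_rpow_of_nonneg _ _ hs.le, ENNReal.mul_rpow_of_nonneg _ _ hs.le,
    horWeight_rpow hs.le, horWeight_rpow hs.le, mul_left_comm, horWeight_mul_horWeight hv]
  congr 2
  field_simp
  ring

lemma lintegral_mul_weightedKernel [NeZero n] (hab : a + b = 2 * n) (hG : Measurable G)
    (u : Hn n) :
    ∫⁻ v, G v * horWeight a v * ENNReal.ofReal (weightedKernel s b lam u v)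
        ∂weightedMeasure n (2 * n) =
      fracInt lam G u * horWeight s u := by
  have hk : Measurable (weightedKernel s b lam u) :=
    measurable_uncurry_weightedKernel.of_uncurry_left
  rw [lintegral_weightedMeasure (by fun_prop), fracInt,
    ← lintegral_mul_const _ (measurable_mul_Hdist_rpow hG u)]
  refine lintegral_congr_ae ?_
  filter_upwards [ae_fst_ne 0] with v hv
  have hweights : horWeight (-(2 * n)) v * horWeight a v * horWeight b v = 1 := by
    rw [horWeight_mul_horWeight hv, horWeight_mul_horWeight hv,
      show -(2 * n) + a + b = 0 by linarith, horWeight, Real.rpow_zero, ENNReal.ofReal_one]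
  have hu := Real.rpow_nonneg (znorm_nonneg u.1) s
  have hv := Real.rpow_nonneg (znorm_nonneg v.1) b
  calc _ = horWeight (-(2 * n)) v * horWeight a v * horWeight b v *
        (G v * ENNReal.ofReal (Hdist u v ^ (-lam)) * horWeight s u) := by
        rw [weightedKernel, ENNReal.ofReal_mul (mul_nonneg hu hv), ENNReal.ofReal_mul hu,
          ← horWeight, ← horWeight]
        ring
    _ = _ := by rw [hweights, one_mul]

namespace SteinWeissExponents

lemma lt_one_of_lt (h : SteinWeissExponents n p p' q lam α β) (hpq : p < q) :
    1 / q + 1 / p' < 1 := by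
  have := one_div_lt_one_div_of_lt h.holderConjugate.pos hpq
  linarith [h.holderConjugate.one_div_add_one_div]

lemma exists_isWeakType_weightedKernel [NeZero n] (h : SteinWeissExponents n p p' q lam α β)
    (hαβ : 0 ≤ α + β) (hpq : p < q) :
    ∃ r M : ℝ, 1 < r ∧ 1 / r = 1 / q + 1 / p' ∧ 0 < M ∧
      (∀ u : Hn n, IsWeakType (weightedMeasure n (2 * n)) M r
        (weightedKernel (-α + 2 * n / q) (2 * n / p' - β) lam u)) ∧
      ∀ v : Hn n, IsWeakType (weightedMeasure n (2 * n)) M r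
        fun u ↦ weightedKernel (-α + 2 * n / q) (2 * n / p' - β) lam u v := by
  have hp'0 := h.holderConjugate.symm.pos
  have hq0 := h.q_pos
  set A := -α + 2 * n / q with hA
  set B := 2 * n / p' - β with hB
  have hA0 : 0 < A := by linarith [h.α_lt]
  have hB0 : 0 < B := sub_pos.2 h.β_lt
  obtain ⟨r, hr⟩ : ∃ r, r = (1 / q + 1 / p')⁻¹ := ⟨_, rfl⟩
  have hr_inv : (1 / q + 1 / p') * r = 1 := by
    rw [hr]
    exact mul_inv_cancel₀ (by positivity)
  have hr1 : 1 < r := hr ▸ (one_lt_inv₀ (by positivity)).2 (h.lt_one_of_lt hpq)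
  have hr0 : 0 < r := zero_lt_one.trans hr1
  have hlr : lam * r = A * r + B * r + 2 := by
    rw [hA, hB]
    linear_combination r * h.balance + 2 * hr_inv
  have hABn : A * r + B * r ≤ 2 * n := by
    have : A * r + B * r + (α + β) * r = 2 * n := by
      rw [hA, hB]
      linear_combination 2 * n * hr_inv
    linarith [mul_nonneg hαβ hr0.le]
  obtain ⟨M₁, hM₁, hweak₁⟩ := exists_forall_isWeakType_weightedKernel hA0 hB0 hr0 hlr hABn
  obtain ⟨M₂, -, hweak₂⟩ := exists_forall_isWeakType_weightedKernel hB0 hA0 hr0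
    (by rwa [add_comm (B * r)]) (by rwa [add_comm])
  refine ⟨r, max M₁ M₂, hr1, by rw [hr, one_div, inv_inv], lt_max_of_lt_left hM₁,
    fun u ↦ (hweak₁ u).mono (le_max_left _ _), fun v ↦ ?_⟩
  simp only [fun u ↦ weightedKernel_comm (A := A) (B := B) (lam := lam) u v]
  exact (hweak₂ v).mono (le_max_right _ _)

lemma exists_lintegral_rpow_le [NeZero n] (h : SteinWeissExponents n p p' q lam α β)
    (hαβ : 0 ≤ α + β) (hpq : p < q) :
    ∃ D : ℝ, ∀ G : Hn n → ℝ≥0∞, Measurable G → massMeasure p β G Set.univ ≤ 1 →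
      ∫⁻ u, (fracInt lam G u * horWeight (-α) u) ^ q ≤ ENNReal.ofReal D ^ q := by
  have hp := h.holderConjugate
  have hq := Real.HolderConjugate.conjExponent (hp.lt.trans hpq)
  obtain ⟨r, M, hr1, hr, hM, hweak, hweak'⟩ := h.exists_isWeakType_weightedKernel hαβ hpq
  obtain ⟨D, hD⟩ := exists_lintegral_rpow_le_of_isWeakType measurable_uncurry_weightedKernel
    weightedKernel_nonneg hp.lt hq hr1 hM
    (by linarith [hp.one_div_add_one_div, hq.one_div_add_one_div]) hweak hweak'
  refine ⟨D, fun G hG hmass ↦ ?_⟩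
  have hexp : β + 2 * n / p + (2 * n / p' - β) = 2 * n := by
    linear_combination (2 * n : ℝ) * hp.inv_add_inv_eq_one
  have hYoung := hD (fun v ↦ G v * horWeight (β + 2 * n / p) v) (by fun_prop) <| by
    rw [lintegral_mul_horWeight_rpow_weightedMeasure hp.pos hG]
    simpa [massMeasure] using hmass
  simpa only [lintegral_mul_weightedKernel hexp hG,
    lintegral_mul_horWeight_rpow_weightedMeasure hq.pos (measurable_fracInt hG)] using hYoung

end SteinWeissExponents
end SteinWeiss

/-! ### The best constant -/

section BestConstant

variable {n : ℕ} {p p' q lam α β : ℝ} {g : Hn n → ℝ} {G : Hn n → ℝ≥0∞}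

lemma muWDz_eq_massMeasure (hp : 0 ≤ p) (hg0 : ∀ v, 0 ≤ g v) :
    muWDz p β g = massMeasure p β fun v ↦ ENNReal.ofReal (g v) := by
  unfold muWDz massMeasure
  congr 1 with v
  rw [ENNReal.mul_rpow_of_nonneg _ _ hp, horWeight_rpow hp, horWeight, abs_of_nonneg (hg0 v),
    ENNReal.ofReal_mul (Real.rpow_nonneg (hg0 v) _), ENNReal.ofReal_rpow_of_nonneg (hg0 v) hp]

lemma eLpNorm_mul_znorm_rpow_eq_one_iff (hp : 0 < p) (hg0 : ∀ v, 0 ≤ g v) :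
    eLpNorm (fun v ↦ g v * znorm v.1 ^ β) (ENNReal.ofReal p) volume = 1 ↔
      massMeasure p β (fun v ↦ ENNReal.ofReal (g v)) Set.univ = 1 := by
  have heq : eLpNorm (fun v ↦ g v * znorm v.1 ^ β) (ENNReal.ofReal p) volume =
      massMeasure p β (fun v ↦ ENNReal.ofReal (g v)) Set.univ ^ (1 / p) := by
    rw [eLpNorm_eq_lintegral_rpow_enorm_toReal (by simpa using hp) (by simp),
      ENNReal.toReal_ofReal hp.le, massMeasure, withDensity_apply _ .univ, Measure.restrict_univ]
    congr 1
    refine lintegral_congr fun v ↦ ?_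
    rw [Real.enorm_eq_ofReal (mul_nonneg (hg0 v) (Real.rpow_nonneg (znorm_nonneg _) _)),
      ENNReal.ofReal_mul (hg0 v), horWeight]
  rw [heq]
  exact (ENNReal.rpow_left_injective (one_div_ne_zero hp.ne')).eq_iff' (ENNReal.one_rpow _)

lemma Ilam_eq_toReal_fracInt (hg : Measurable g) (hg0 : ∀ v, 0 ≤ g v) (u : Hn n) :
    Ilam lam g u = (fracInt lam (fun v ↦ ENNReal.ofReal (g v)) u).toReal := by
  have hd : Measurable (Hdist u) := measurable_uncurry_Hdist.of_uncurry_left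
  rw [Ilam, fracInt, integral_eq_lintegral_of_nonneg_ae
    (.of_forall fun v ↦ div_nonneg (hg0 v) (Real.rpow_nonneg (Hdist_nonneg u v) _))
    (hg.div (hd.pow_const lam)).aestronglyMeasurable]
  congr 1
  refine lintegral_congr fun v ↦ ?_
  rw [← ENNReal.ofReal_mul (hg0 v), Real.rpow_neg (Hdist_nonneg u v), div_eq_mul_inv]

lemma eLpNorm_Ilam_mul_znorm_rpow [NeZero n] (hq : 0 < q) (hg : Measurable g)
    (hg0 : ∀ v, 0 ≤ g v)
    (hfin : fracIntNorm q lam α (fun v ↦ ENNReal.ofReal (g v)) ≠ ∞) :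
    eLpNorm (fun u ↦ Ilam lam g u * znorm u.1 ^ (-α)) (ENNReal.ofReal q) volume =
      fracIntNorm q lam α fun v ↦ ENNReal.ofReal (g v) := by
  rw [eLpNorm_eq_lintegral_rpow_enorm_toReal (by simpa using hq) (by simp),
    ENNReal.toReal_ofReal hq.le, fracIntNorm]
  congr 1
  have hmeas := measurable_fracInt (lam := lam) hg.ennreal_ofReal
  have hint : ∫⁻ u, (fracInt lam (fun v ↦ ENNReal.ofReal (g v)) u * horWeight (-α) u) ^ q ≠ ∞ :=
    fun h ↦ hfin (by rw [fracIntNorm, h, ENNReal.top_rpow_of_pos (by positivity)])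
  refine lintegral_congr_ae ?_
  filter_upwards [ae_lt_top (by fun_prop) hint, ae_fst_ne 0] with u hu hu0
  have hlt : fracInt lam (fun v ↦ ENNReal.ofReal (g v)) u < ∞ :=
    lt_top_of_mul_ne_top_left ((ENNReal.rpow_lt_top_iff_of_pos hq).1 hu).ne
      (horWeight_ne_zero hu0)
  have hz := Real.rpow_nonneg (znorm_nonneg u.1) (-α)
  rw [Ilam_eq_toReal_fracInt hg hg0, Real.enorm_eq_ofReal (by positivity),
    ENNReal.ofReal_mul (by positivity), ENNReal.ofReal_toReal hlt.ne, horWeight]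

lemma massMeasure_indicator (hp : 0 < p) {S : Set (Hn n)} (hS : MeasurableSet S) :
    massMeasure p β (S.indicator G) Set.univ = massMeasure p β G S := by
  rw [massMeasure, massMeasure, withDensity_apply _ hS, withDensity_apply _ .univ,
    Measure.restrict_univ, ← lintegral_indicator hS]
  refine lintegral_congr fun v ↦ ?_
  by_cases hv : v ∈ S <;> simp [hv, hp]

lemma massMeasure_congr_ae {G' : Hn n → ℝ≥0∞} (h : G =ᵐ[volume] G') :
    massMeasure p β G = massMeasure p β G' :=
  withDensity_congr_ae (h.mono fun v hv ↦ by simp only [hv])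

lemma fracInt_congr_ae {G' : Hn n → ℝ≥0∞} (h : G =ᵐ[volume] G') :
    fracInt lam G = fracInt lam G' :=
  funext fun _ ↦ lintegral_congr_ae (h.mono fun v hv ↦ by simp only [hv])

lemma fracIntNorm_congr_ae {G' : Hn n → ℝ≥0∞} (h : G =ᵐ[volume] G') :
    fracIntNorm q lam α G = fracIntNorm q lam α G' := by
  rw [fracIntNorm, fracIntNorm, fracInt_congr_ae h]

lemma massMeasure_const_mul (hp : 0 ≤ p) (hG : Measurable G) (c : ℝ≥0∞) :
    massMeasure p β (fun v ↦ c * G v) Set.univ = c ^ p * massMeasure p β G Set.univ := by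
  simp only [massMeasure, withDensity_apply _ MeasurableSet.univ, Measure.restrict_univ, mul_assoc,
    ENNReal.mul_rpow_of_nonneg c _ hp]
  exact lintegral_const_mul _ (by fun_prop)

lemma fracIntNorm_const_mul (hq : 0 < q) (hG : Measurable G) (c : ℝ≥0∞) :
    fracIntNorm q lam α (fun v ↦ c * G v) = c * fracIntNorm q lam α G := by
  have hmeas := measurable_fracInt (lam := lam) hG
  have hfrac (u : Hn n) : fracInt lam (fun v ↦ c * G v) u = c * fracInt lam G u := by
    simp only [fracInt, mul_assoc]
    exact lintegral_const_mul _ (measurable_mul_Hdist_rpow hG u)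
  simp only [fracIntNorm, hfrac, mul_assoc, ENNReal.mul_rpow_of_nonneg c _ hq.le]
  rw [lintegral_const_mul _ (by fun_prop), ENNReal.mul_rpow_of_nonneg _ _ (by positivity),
    ← ENNReal.rpow_mul, mul_one_div_cancel hq.ne', ENNReal.rpow_one]

lemma ae_eq_zero_of_massMeasure_eq_zero [NeZero n] (hp : 0 < p) (hG : Measurable G)
    (h : massMeasure p β G Set.univ = 0) : G =ᵐ[volume] 0 := by
  rw [massMeasure, withDensity_apply _ .univ, Measure.restrict_univ,
    lintegral_eq_zero_iff (by fun_prop)] at h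
  filter_upwards [h, ae_fst_ne 0] with v hv hv0
  simpa [hp, hp.not_gt, horWeight_ne_zero hv0] using hv

lemma ae_ne_top_of_massMeasure_ne_top [NeZero n] (hp : 0 < p) (hG : Measurable G)
    (h : massMeasure p β G Set.univ ≠ ∞) : ∀ᵐ v, G v ≠ ∞ := by
  rw [massMeasure, withDensity_apply _ .univ, Measure.restrict_univ] at h
  filter_upwards [ae_lt_top (by fun_prop) h, ae_fst_ne 0] with v hv hv0
  exact (lt_top_of_mul_ne_top_left ((ENNReal.rpow_lt_top_iff_of_pos hp).1 hv).ne
    (horWeight_ne_zero hv0)).ne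

lemma fracIntNorm_zero (hq : 0 < q) : fracIntNorm (n := n) q lam α 0 = 0 := by
  simp [fracIntNorm, fracInt, hq]

lemma fracIntNorm_ne_zero [NeZero n] (hq : 0 < q) (hG : Measurable G)
    (h : ¬ G =ᵐ[volume] 0) : fracIntNorm q lam α G ≠ 0 := by
  refine fun hzero ↦ h ?_
  have hmeas := measurable_fracInt (lam := lam) hG
  rw [fracIntNorm, ENNReal.rpow_eq_zero_iff_of_pos (by positivity),
    lintegral_eq_zero_iff (by fun_prop)] at hzero
  obtain ⟨u, hu, hu0⟩ := (hzero.and (ae_fst_ne 0)).exists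
  have hfrac : fracInt lam G u = 0 := by
    simpa [hq, hq.not_gt, horWeight_ne_zero hu0] using hu
  rw [fracInt, lintegral_eq_zero_iff (measurable_mul_Hdist_rpow hG u)] at hfrac
  filter_upwards [hfrac, ae_fst_ne u.1] with v hv hvu
  have hd : 0 < Hdist u v :=
    (znorm_pos (sub_ne_zero.2 hvu)).trans_le (znorm_sub_le_Hdist u v)
  simpa [(Real.rpow_pos_of_pos hd _).not_ge] using hv

lemma fracIntNorm_le_mul_of_forall_massMeasure_eq_one [NeZero n] (hp : 0 < p) (hq : 0 < q)
    {C : ℝ≥0∞} (hC : ∀ G : Hn n → ℝ≥0∞, Measurable G → massMeasure p β G Set.univ = 1 →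
      fracIntNorm q lam α G ≤ C) (hG : Measurable G) (hfin : massMeasure p β G Set.univ ≠ ∞) :
    fracIntNorm q lam α G ≤ C * massMeasure p β G Set.univ ^ (1 / p) := by
  rcases eq_or_ne (massMeasure p β G Set.univ) 0 with h0 | h0
  · rw [fracIntNorm_congr_ae (ae_eq_zero_of_massMeasure_eq_zero hp hG h0)]
    exact (fracIntNorm_zero hq).trans_le zero_le
  set m := massMeasure p β G Set.univ
  have hm0 : m ^ (1 / p) ≠ 0 := by simp [h0, hp, hfin]
  have hmtop : m ^ (1 / p) ≠ ∞ := by simp [h0, hfin]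
  have hscaled := hC (fun v ↦ (m ^ (1 / p))⁻¹ * G v) (by fun_prop) <| by
    rw [massMeasure_const_mul hp.le hG, ENNReal.inv_rpow, ← ENNReal.rpow_mul,
      one_div_mul_cancel hp.ne', ENNReal.rpow_one, ENNReal.inv_mul_cancel h0 hfin]
  rwa [fracIntNorm_const_mul hq hG, ENNReal.inv_mul_le_iff hm0 hmtop, mul_comm] at hscaled

namespace SteinWeissExponents

lemma exists_fracIntNorm_le [NeZero n] (h : SteinWeissExponents n p p' q lam α β)
    (hαβ : 0 ≤ α + β) (hpq : p < q) :
    ∃ D : ℝ, ∀ G : Hn n → ℝ≥0∞, Measurable G → massMeasure p β G Set.univ = 1 →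
      fracIntNorm q lam α G ≤ ENNReal.ofReal D := by
  obtain ⟨D, hD⟩ := h.exists_lintegral_rpow_le hαβ hpq
  refine ⟨D, fun G hG hmass ↦ ?_⟩
  rw [fracIntNorm, one_div, ENNReal.rpow_inv_le_iff h.q_pos]
  exact hD G hG hmass.le

lemma eLpNorm_eq_fracIntNorm [NeZero n] (h : SteinWeissExponents n p p' q lam α β)
    (hαβ : 0 ≤ α + β) (hpq : p < q) (hg : Measurable g) (hg0 : ∀ v, 0 ≤ g v)
    (hmass : massMeasure p β (fun v ↦ ENNReal.ofReal (g v)) Set.univ = 1) :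
    eLpNorm (fun u ↦ Ilam lam g u * znorm u.1 ^ (-α)) (ENNReal.ofReal q) volume =
      fracIntNorm q lam α fun v ↦ ENNReal.ofReal (g v) := by
  obtain ⟨D, hD⟩ := h.exists_fracIntNorm_le hαβ hpq
  exact eLpNorm_Ilam_mul_znorm_rpow h.q_pos hg hg0
    ((hD _ hg.ennreal_ofReal hmass).trans_lt ENNReal.ofReal_lt_top).ne

lemma SWbestConst_ne_top [NeZero n] (h : SteinWeissExponents n p p' q lam α β)
    (hαβ : 0 ≤ α + β) (hpq : p < q) : SWbestConstHorizontal n p q lam α β ≠ ∞ := by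
  obtain ⟨D, hD⟩ := h.exists_fracIntNorm_le hαβ hpq
  refine ((sSup_le ?_).trans_lt (ENNReal.ofReal_lt_top (r := D))).ne
  rintro _ ⟨g, hg, hg0, hnorm, rfl⟩
  rw [eLpNorm_mul_znorm_rpow_eq_one_iff h.holderConjugate.pos hg0] at hnorm
  rw [h.eLpNorm_eq_fracIntNorm hαβ hpq hg hg0 hnorm]
  exact hD _ hg.ennreal_ofReal hnorm

lemma fracIntNorm_le_SWbestConst [NeZero n] (h : SteinWeissExponents n p p' q lam α β)
    (hαβ : 0 ≤ α + β) (hpq : p < q) (hG : Measurable G)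
    (hmass : massMeasure p β G Set.univ = 1) :
    fracIntNorm q lam α G ≤ SWbestConstHorizontal n p q lam α β := by
  have hp := h.holderConjugate.pos
  have hae : (fun v ↦ ENNReal.ofReal (G v).toReal) =ᵐ[volume] G :=
    (ae_ne_top_of_massMeasure_ne_top hp hG (hmass ▸ one_ne_top)).mono
      fun v hv ↦ ENNReal.ofReal_toReal hv
  have hmass' := massMeasure_congr_ae (p := p) (β := β) hae ▸ hmass
  refine le_sSup ⟨fun v ↦ (G v).toReal, hG.ennreal_toReal, fun _ ↦ ENNReal.toReal_nonneg, ?_, ?_⟩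
  · rwa [eLpNorm_mul_znorm_rpow_eq_one_iff hp fun _ ↦ ENNReal.toReal_nonneg]
  · rw [h.eLpNorm_eq_fracIntNorm hαβ hpq hG.ennreal_toReal (fun _ ↦ ENNReal.toReal_nonneg) hmass',
      fracIntNorm_congr_ae hae]

lemma fracIntNorm_le_SWbestConst_mul [NeZero n] (h : SteinWeissExponents n p p' q lam α β)
    (hαβ : 0 ≤ α + β) (hpq : p < q) (hG : Measurable G)
    (hfin : massMeasure p β G Set.univ ≠ ∞) :
    fracIntNorm q lam α G ≤
      SWbestConstHorizontal n p q lam α β * massMeasure p β G Set.univ ^ (1 / p) :=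
  fracIntNorm_le_mul_of_forall_massMeasure_eq_one h.holderConjugate.pos h.q_pos
    (fun _ ↦ h.fracIntNorm_le_SWbestConst hαβ hpq) hG hfin

lemma SWbestConst_ne_zero [NeZero n] (h : SteinWeissExponents n p p' q lam α β)
    (hαβ : 0 ≤ α + β) (hpq : p < q) (hG : Measurable G)
    (hmass : massMeasure p β G Set.univ = 1) : SWbestConstHorizontal n p q lam α β ≠ 0 := by
  refine ((fracIntNorm_ne_zero h.q_pos hG fun h0 ↦ ?_).bot_lt.trans_le
    (h.fracIntNorm_le_SWbestConst hαβ hpq hG hmass)).ne'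
  rw [massMeasure_congr_ae h0] at hmass
  simp [massMeasure, h.holderConjugate.pos] at hmass

end SteinWeissExponents
end BestConstant

/-! ### Off-diagonal decay -/

section OffDiagonal

variable {n : ℕ} {p p' q lam α β a : ℝ} {G φ ψ : Hn n → ℝ≥0∞} {S U : Set (Hn n)}

lemma measurableSet_Hnorm_lt (ρ : ℝ) : MeasurableSet {v : Hn n | Hnorm v < ρ} :=
  measurableSet_lt measurable_Hnorm measurable_const

lemma measurableSet_le_Hnorm (ρ : ℝ) : MeasurableSet {v : Hn n | ρ ≤ Hnorm v} :=
  measurableSet_le measurable_const measurable_Hnorm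

lemma exists_hasVolumeGrowth_Hnorm_weightedMeasure [NeZero n] (ha : a < 2 * n) :
    ∃ V : ℝ, 0 < V ∧ HasVolumeGrowth (weightedMeasure n a) Hnorm V (2 * n + 2 - a) := by
  obtain ⟨V, hV, hgrowth⟩ := exists_forall_hasVolumeGrowth_znorm_sub n
  obtain ⟨C, hC, hint⟩ := (hasVolumeGrowth_znorm hgrowth).exists_setLIntegral_lt_rpow_neg_le
    measurable_znorm znorm_nonneg hV ha
  refine ⟨2 * C, by positivity, fun ρ hρ ↦ ?_⟩
  have hsub (v : Hn n) (hv : Hnorm v < ρ) : v.1 ∈ Set.univ ∧ Hdist 0 v < ρ :=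
    ⟨Set.mem_univ _, by rwa [Hdist_zero_left]⟩
  calc weightedMeasure n a {v | Hnorm v < ρ}
      ≤ ∫⁻ z in Set.univ ∩ {z | znorm (z - (0 : Hn n).1) < ρ},
          ENNReal.ofReal (2 * ρ ^ 2 * znorm z ^ (-a)) :=
        weightedMeasure_le_setLIntegral (measurableSet_Hnorm_lt ρ) .univ measurable_const 0 hsub
    _ = ENNReal.ofReal (2 * ρ ^ 2) *
          ∫⁻ z in {z : Fin n → ℂ | znorm z < ρ}, ENNReal.ofReal (znorm z ^ (-a)) := by
        rw [← lintegral_const_mul _ (by fun_prop)]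
        simp only [Set.univ_inter, Prod.fst_zero, sub_zero,
          ENNReal.ofReal_mul (show 0 ≤ 2 * ρ ^ 2 by positivity)]
    _ ≤ ENNReal.ofReal (2 * ρ ^ 2) * ENNReal.ofReal (C * ρ ^ (2 * n - a)) := by grw [hint ρ hρ]
    _ = _ := by
        rw [← ENNReal.ofReal_mul (by positivity),
          show 2 * n + 2 - a = (2 * n - a) + 2 by ring, Real.rpow_add hρ, Real.rpow_two]
        ring_nf

lemma setLIntegral_weightedMeasure (hS : MeasurableSet S) (hφ : Measurable φ) :
    ∫⁻ v in S, φ v ∂weightedMeasure n a = ∫⁻ v in S, horWeight (-a) v * φ v := by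
  rw [← lintegral_indicator hS, lintegral_weightedMeasure (hφ.indicator hS),
    ← lintegral_indicator hS]
  exact lintegral_congr fun v ↦ (Set.indicator_mul_right S _ φ).symm

lemma setLIntegral_mul_le_massMeasure_rpow_mul [NeZero n] (hp : p.HolderConjugate p')
    (hS : MeasurableSet S) (hG : Measurable G) (hψ : Measurable ψ) :
    ∫⁻ v in S, G v * ψ v ≤ massMeasure p β G S ^ (1 / p) *
      (∫⁻ v in S, ψ v ^ p' ∂weightedMeasure n (β * p')) ^ (1 / p') := by
  calc ∫⁻ v in S, G v * ψ v
      = ∫⁻ v in S, ((fun v ↦ G v * horWeight β v) * fun v ↦ horWeight (-β) v * ψ v) v := by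
        refine lintegral_congr_ae (ae_restrict_of_ae ?_)
        filter_upwards [ae_fst_ne 0] with v hv
        have hweights : horWeight β v * horWeight (-β) v = 1 := by
          rw [horWeight_mul_horWeight hv, add_neg_cancel, horWeight, Real.rpow_zero,
            ENNReal.ofReal_one]
        rw [Pi.mul_apply, mul_assoc, ← mul_assoc (horWeight β v), hweights, one_mul]
    _ ≤ (∫⁻ v in S, (G v * horWeight β v) ^ p) ^ (1 / p) *
          (∫⁻ v in S, (horWeight (-β) v * ψ v) ^ p') ^ (1 / p') :=
        ENNReal.lintegral_mul_le_Lp_mul_Lq _ hp (by fun_prop) (by fun_prop)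
    _ = _ := by
        rw [massMeasure, withDensity_apply _ hS, setLIntegral_weightedMeasure hS (by fun_prop)]
        simp only [ENNReal.mul_rpow_of_nonneg _ _ hp.symm.nonneg, horWeight_rpow hp.symm.nonneg,
          neg_mul]

lemma setLIntegral_fracInt_rpow_le_of_kernel_le [NeZero n] (hp : p.HolderConjugate p') (hq : 0 < q)
    (hS : MeasurableSet S) (hU : MeasurableSet U) (hφ : Measurable φ) (hψ : Measurable ψ)
    (hkernel : ∀ u ∈ U, ∀ v ∈ S, ENNReal.ofReal (Hdist u v ^ (-lam)) ≤ φ u * ψ v)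
    (hG : Measurable G) (hGS : ∀ v ∉ S, G v = 0) (hmass : massMeasure p β G Set.univ ≤ 1) :
    ∫⁻ u in U, (fracInt lam G u * horWeight (-α) u) ^ q ≤
      (∫⁻ v in S, ψ v ^ p' ∂weightedMeasure n (β * p')) ^ (q / p') *
        ∫⁻ u in U, φ u ^ q ∂weightedMeasure n (α * q) := by
  set I := ∫⁻ v in S, ψ v ^ p' ∂weightedMeasure n (β * p')
  have hfrac (u : Hn n) (hu : u ∈ U) : fracInt lam G u ≤ φ u * I ^ (1 / p') := by
    calc fracInt lam G u = ∫⁻ v in S, G v * ENNReal.ofReal (Hdist u v ^ (-lam)) := by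
          refine (setLIntegral_eq_of_support_subset fun v hv ↦ ?_).symm
          by_contra hvS
          simp [hGS v hvS] at hv
      _ ≤ ∫⁻ v in S, φ u * (G v * ψ v) := setLIntegral_mono' hS fun v hv ↦ by
          grw [hkernel u hu v hv, mul_left_comm]
      _ = φ u * ∫⁻ v in S, G v * ψ v := lintegral_const_mul _ (by fun_prop)
      _ ≤ φ u * (1 ^ (1 / p) * I ^ (1 / p')) := by
          grw [setLIntegral_mul_le_massMeasure_rpow_mul hp hS hG hψ, measure_mono S.subset_univ,
            hmass]
          all_goals exact hp.one_div_nonneg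
      _ = φ u * I ^ (1 / p') := by rw [ENNReal.one_rpow, one_mul]
  calc ∫⁻ u in U, (fracInt lam G u * horWeight (-α) u) ^ q
      ≤ ∫⁻ u in U, I ^ (q / p') * (horWeight (-(α * q)) u * φ u ^ q) := by
        refine setLIntegral_mono' hU fun u hu ↦ ?_
        calc _ ≤ (φ u * I ^ (1 / p') * horWeight (-α) u) ^ q := by grw [hfrac u hu]
          _ = _ := by
            rw [ENNReal.mul_rpow_of_nonneg _ _ hq.le, ENNReal.mul_rpow_of_nonneg _ _ hq.le,
              horWeight_rpow hq.le, ← ENNReal.rpow_mul, one_div_mul_eq_div, neg_mul]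
            ring
    _ = _ := by
        rw [lintegral_const_mul _ (by fun_prop), setLIntegral_weightedMeasure hU (by fun_prop)]

lemma ofReal_Hdist_rpow_neg_le (hlam : 0 ≤ lam) {u v : Hn n} (hu : 0 < Hnorm u)
    (h : 2 * Hnorm v ≤ Hnorm u) :
    ENNReal.ofReal (Hdist u v ^ (-lam)) ≤
      ENNReal.ofReal (2 ^ lam) * ENNReal.ofReal (Hnorm u ^ (-lam)) := by
  rw [← ENNReal.ofReal_mul (by positivity)]
  refine ENNReal.ofReal_le_ofReal ?_
  calc Hdist u v ^ (-lam) ≤ (Hnorm u / 2) ^ (-lam) :=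
        Real.rpow_le_rpow_of_nonpos (by positivity) (half_Hnorm_le_Hdist h) (by linarith)
    _ = 2 ^ lam * Hnorm u ^ (-lam) := by
        rw [Real.div_rpow hu.le zero_le_two, Real.rpow_neg zero_le_two, div_inv_eq_mul, mul_comm]

lemma ofReal_Hnorm_rpow_neg_rpow {s : ℝ} (hs : 0 ≤ s) (v : Hn n) :
    ENNReal.ofReal (Hnorm v ^ (-lam)) ^ s = ENNReal.ofReal (Hnorm v ^ (-(lam * s))) := by
  rw [ENNReal.ofReal_rpow_of_nonneg (Real.rpow_nonneg (Hnorm_nonneg v) _) hs,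
    ← Real.rpow_mul (Hnorm_nonneg v), neg_mul]

lemma setLIntegral_fracInt_outside_le [NeZero n] (hp : p.HolderConjugate p') (hq : 0 < q)
    (hlam : 0 ≤ lam) {r R : ℝ} (hr : 0 < r) (hrR : 2 * r ≤ R) (hG : Measurable G)
    (hGr : ∀ v, r ≤ Hnorm v → G v = 0) (hmass : massMeasure p β G Set.univ ≤ 1) :
    ∫⁻ u in {u | R ≤ Hnorm u}, (fracInt lam G u * horWeight (-α) u) ^ q ≤
      weightedMeasure n (β * p') {v | Hnorm v < r} ^ (q / p') * (ENNReal.ofReal (2 ^ lam) ^ q *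
        ∫⁻ u in {u | R ≤ Hnorm u}, ENNReal.ofReal (Hnorm u ^ (-(lam * q)))
          ∂weightedMeasure n (α * q)) := by
  refine (setLIntegral_fracInt_rpow_le_of_kernel_le (S := {v | Hnorm v < r}) (ψ := 1)
    (φ := fun u ↦ ENNReal.ofReal (2 ^ lam) * ENNReal.ofReal (Hnorm u ^ (-lam))) hp hq
    (measurableSet_Hnorm_lt r) (measurableSet_le_Hnorm R) (by fun_prop) measurable_one
    (fun u (hu : R ≤ Hnorm u) v (hv : Hnorm v < r) ↦ ?_) hG (fun v hv ↦ hGr v (not_lt.1 hv))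
    hmass).trans_eq ?_
  · rw [Pi.one_apply, mul_one]
    exact ofReal_Hdist_rpow_neg_le hlam (by linarith) (by linarith)
  · simp only [ENNReal.mul_rpow_of_nonneg _ _ hq.le, ofReal_Hnorm_rpow_neg_rpow hq.le,
      Pi.one_apply, ENNReal.one_rpow, setLIntegral_one]
    rw [lintegral_const_mul _ (by fun_prop)]

lemma setLIntegral_fracInt_inside_le [NeZero n] (hp : p.HolderConjugate p') (hq : 0 < q)
    (hlam : 0 ≤ lam) {r R : ℝ} (hR : 0 < R) (hrR : 2 * r ≤ R) (hG : Measurable G)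
    (hGR : ∀ v, Hnorm v < R → G v = 0) (hmass : massMeasure p β G Set.univ ≤ 1) :
    ∫⁻ u in {u | Hnorm u < r}, (fracInt lam G u * horWeight (-α) u) ^ q ≤
      (∫⁻ v in {v | R ≤ Hnorm v}, ENNReal.ofReal (Hnorm v ^ (-(lam * p')))
        ∂weightedMeasure n (β * p')) ^ (q / p') *
        (ENNReal.ofReal (2 ^ lam) ^ q * weightedMeasure n (α * q) {u | Hnorm u < r}) := by
  refine (setLIntegral_fracInt_rpow_le_of_kernel_le (S := {v | R ≤ Hnorm v})
    (φ := fun _ ↦ ENNReal.ofReal (2 ^ lam)) (ψ := fun v ↦ ENNReal.ofReal (Hnorm v ^ (-lam))) hp hq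
    (measurableSet_le_Hnorm R) (measurableSet_Hnorm_lt r) measurable_const (by fun_prop)
    (fun u (hu : Hnorm u < r) v (hv : R ≤ Hnorm v) ↦ ?_) hG (fun v hv ↦ hGR v (not_le.1 hv))
    hmass).trans_eq ?_
  · rw [Hdist_comm]
    exact ofReal_Hdist_rpow_neg_le hlam (hR.trans_le hv) (by linarith)
  · simp only [ofReal_Hnorm_rpow_neg_rpow hp.symm.nonneg, setLIntegral_const]

namespace SteinWeissExponents

lemma lam_pos (h : SteinWeissExponents n p p' q lam α β) : 0 < lam := by
  have := one_div_pos.2 h.q_pos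
  have := h.holderConjugate.symm.one_div_pos
  have hsum : lam = (2 * n / q - α) + (2 * n / p' - β) + 2 * (1 / q + 1 / p') := by
    linear_combination h.balance
  linarith [h.α_lt, h.β_lt]

lemma mul_q_lt (h : SteinWeissExponents n p p' q lam α β) : α * q < 2 * n :=
  (lt_div_iff₀ h.q_pos).1 h.α_lt

lemma mul_p'_lt (h : SteinWeissExponents n p p' q lam α β) : β * p' < 2 * n :=
  (lt_div_iff₀ h.holderConjugate.symm.pos).1 h.β_lt

lemma exists_setLIntegral_fracInt_outside_le [NeZero n]
    (h : SteinWeissExponents n p p' q lam α β) :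
    ∃ D σ : ℝ, 0 < σ ∧ ∀ ρ r : ℝ, 2 ≤ ρ → 0 < r → ∀ G : Hn n → ℝ≥0∞, Measurable G →
      massMeasure p β G Set.univ ≤ 1 → (∀ v, r ≤ Hnorm v → G v = 0) →
      ∫⁻ u in {u | ρ * r ≤ Hnorm u}, (fracInt lam G u * horWeight (-α) u) ^ q ≤
        ENNReal.ofReal (D * ρ ^ (-σ)) := by
  have hq := h.q_pos
  have hp' := h.holderConjugate.symm.pos
  have hα := h.mul_q_lt
  set d : ℝ := 2 * n + 2 - β * p' with hd
  have hσ : 0 < d * (q / p') := mul_pos (by linarith [h.mul_p'_lt]) (by positivity)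
  have hexp : 2 * n + 2 - α * q - lam * q = -(d * (q / p')) := by
    rw [hd, eq_sub_of_add_eq (eq_sub_of_add_eq h.balance)]
    field_simp
    ring
  obtain ⟨V, hV, hball⟩ := exists_hasVolumeGrowth_Hnorm_weightedMeasure (n := n) h.mul_p'_lt
  obtain ⟨W, hW, hgrowth⟩ := exists_hasVolumeGrowth_Hnorm_weightedMeasure (n := n) hα
  obtain ⟨C, _, htail⟩ := hgrowth.exists_setLIntegral_ge_rpow_neg_le measurable_Hnorm
    Hnorm_nonneg hW (by linarith) (show _ < lam * q by linarith)
  refine ⟨V ^ (q / p') * (2 ^ lam) ^ q * C, d * (q / p'), hσ, fun ρ r hρ hr G hG hmass hGr ↦ ?_⟩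
  have hρ0 : 0 < ρ := by linarith
  calc _ ≤ ENNReal.ofReal (V * r ^ d) ^ (q / p') *
          (ENNReal.ofReal (2 ^ lam) ^ q * ENNReal.ofReal (C * (ρ * r) ^ (-(d * (q / p'))))) := by
        grw [setLIntegral_fracInt_outside_le h.holderConjugate hq h.lam_pos.le hr (by nlinarith)
          hG hGr hmass, hball r hr, htail (ρ * r) (by positivity), hexp]
    _ = _ := by
        rw [ENNReal.ofReal_rpow_of_nonneg (by positivity) (by positivity),
          ENNReal.ofReal_rpow_of_nonneg (by positivity) hq.le, ← ENNReal.ofReal_mul (by positivity),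
          ← ENNReal.ofReal_mul (by positivity), Real.mul_rpow hV.le (by positivity),
          ← Real.rpow_mul hr.le, Real.mul_rpow hρ0.le hr.le, Real.rpow_neg hr.le]
        field_simp

lemma exists_setLIntegral_fracInt_inside_le [NeZero n]
    (h : SteinWeissExponents n p p' q lam α β) :
    ∃ D σ : ℝ, 0 < σ ∧ ∀ ρ r : ℝ, 2 ≤ ρ → 0 < r → ∀ G : Hn n → ℝ≥0∞, Measurable G →
      massMeasure p β G Set.univ ≤ 1 → (∀ v, Hnorm v < ρ * r → G v = 0) →
      ∫⁻ u in {u | Hnorm u < r}, (fracInt lam G u * horWeight (-α) u) ^ q ≤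
        ENNReal.ofReal (D * ρ ^ (-σ)) := by
  have hq := h.q_pos
  have hp' := h.holderConjugate.symm.pos
  have hβ := h.mul_p'_lt
  set d : ℝ := 2 * n + 2 - α * q with hd
  have hσ : 0 < d := by linarith [h.mul_q_lt]
  have hexp : 2 * n + 2 - β * p' - lam * p' = -(d * (p' / q)) := by
    rw [hd, eq_sub_of_add_eq (eq_sub_of_add_eq h.balance)]
    field_simp
    ring
  obtain ⟨V, _, hball⟩ := exists_hasVolumeGrowth_Hnorm_weightedMeasure (n := n) h.mul_q_lt
  obtain ⟨W, hW, hgrowth⟩ := exists_hasVolumeGrowth_Hnorm_weightedMeasure (n := n) hβ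
  obtain ⟨C, hC, htail⟩ := hgrowth.exists_setLIntegral_ge_rpow_neg_le measurable_Hnorm
    Hnorm_nonneg hW (by linarith)
    (show _ < lam * p' by linarith [(by positivity : 0 < d * (p' / q))])
  refine ⟨C ^ (q / p') * (2 ^ lam) ^ q * V, d, hσ, fun ρ r hρ hr G hG hmass hGr ↦ ?_⟩
  have hρ0 : 0 < ρ := by linarith
  calc _ ≤ ENNReal.ofReal (C * (ρ * r) ^ (-(d * (p' / q)))) ^ (q / p') *
          (ENNReal.ofReal (2 ^ lam) ^ q * ENNReal.ofReal (V * r ^ d)) := by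
        grw [setLIntegral_fracInt_inside_le h.holderConjugate hq h.lam_pos.le
          (by positivity : 0 < ρ * r) (by nlinarith) hG hGr hmass, hball r hr,
          htail (ρ * r) (by positivity), hexp]
    _ = _ := by
        rw [ENNReal.ofReal_rpow_of_nonneg (by positivity) (by positivity),
          ENNReal.ofReal_rpow_of_nonneg (by positivity) hq.le, ← ENNReal.ofReal_mul (by positivity),
          ← ENNReal.ofReal_mul (by positivity), Real.mul_rpow hC.le (by positivity),
          ← Real.rpow_mul (by positivity), neg_mul, mul_assoc d,
          div_mul_div_cancel₀ hq.ne', div_self hp'.ne', mul_one,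
          Real.mul_rpow hρ0.le hr.le, Real.rpow_neg hr.le]
        field_simp

end SteinWeissExponents
end OffDiagonal

/-! ### Concentration of near-maximizers -/

section Concentration

lemma rpow_add_rpow_le_one_sub_rpow {a b δ : ℝ≥0∞} {κ : ℝ} (hκ : 1 ≤ κ) (hab : a + b ≤ 1)
    (ha : δ ≤ a) (hb : δ ≤ b) : a ^ κ + b ^ κ ≤ (1 - δ) ^ (κ - 1) := by
  have hδ : δ ≠ ∞ := ne_top_of_le_ne_top one_ne_top (ha.trans (le_self_add.trans hab))
  have hle (x y : ℝ≥0∞) (hxy : x + y ≤ 1) (hy : δ ≤ y) : x ^ κ ≤ x * (1 - δ) ^ (κ - 1) := by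
    have hx : x ≤ 1 - δ := ENNReal.le_sub_of_add_le_right hδ (by grw [hy, hxy])
    calc x ^ κ = x * x ^ (κ - 1) := by
          conv_lhs => rw [← add_sub_cancel 1 κ,
            ENNReal.rpow_add_of_nonneg _ _ zero_le_one (by linarith), ENNReal.rpow_one]
      _ ≤ x * (1 - δ) ^ (κ - 1) := by gcongr
  calc a ^ κ + b ^ κ ≤ a * (1 - δ) ^ (κ - 1) + b * (1 - δ) ^ (κ - 1) :=
        add_le_add (hle a b hab hb) (hle b a (by rwa [add_comm]) ha)
    _ ≤ (1 - δ) ^ (κ - 1) := by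
        rw [← add_mul]
        exact mul_le_of_le_one_left' hab

lemma indicator_add_indicator_add_indicator_Ico {X : Type*} {N : X → ℝ} {G : X → ℝ≥0∞} {r R : ℝ}
    (hrR : r ≤ R) :
    {x | N x < r}.indicator G + {x | R ≤ N x}.indicator G +
      (N ⁻¹' Set.Ico r R).indicator G = G := by
  ext x
  by_cases hr : N x < r
  · simp [Set.indicator, hr, (hr.trans_le hrR).not_ge, hr.not_ge]
  · by_cases hR : N x < R
    · simp [Set.indicator, hr, hR, hR.not_ge, not_lt.1 hr]
    · simp [Set.indicator, hr, hR, not_lt.1 hR]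

variable {X : Type*} [MeasurableSpace X] {μ : Measure X}

lemma exists_lt_measure_le_inv_of_pairwise_disjoint {s : ℕ → Set X} (hμ : μ Set.univ ≤ 1)
    (hs : ∀ m, MeasurableSet (s m)) (hd : Pairwise (Function.onFun Disjoint s)) {M : ℕ}
    (hM : M ≠ 0) : ∃ m < M, μ (s m) ≤ (M : ℝ≥0∞)⁻¹ := by
  by_contra! hlt
  have hsum : ∑ m ∈ Finset.range M, μ (s m) ≤ 1 :=
    (sum_measure_le_measure_univ (fun m _ ↦ (hs m).nullMeasurableSet)
      fun i _ j _ hij ↦ (hd hij).aedisjoint).trans hμ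
  have hconst : ∑ _ ∈ Finset.range M, (M : ℝ≥0∞)⁻¹ = 1 := by
    simp [ENNReal.mul_inv_cancel, hM]
  refine (hconst ▸ ENNReal.sum_lt_sum_of_nonempty ?_ fun m hm ↦ hlt m ?_).not_ge hsum
  · simpa using hM
  · simpa using hm

lemma lintegral_indicator_rpow {q : ℝ} (hq : 0 < q) {s : Set X} (hs : MeasurableSet s)
    (f : X → ℝ≥0∞) : ∫⁻ x, s.indicator f x ^ q ∂μ = ∫⁻ x in s, f x ^ q ∂μ := by
  rw [← lintegral_indicator hs]
  refine lintegral_congr fun x ↦ ?_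
  by_cases hx : x ∈ s <;> simp [hx, hq]

lemma lintegral_rpow_add_le_of_split {q : ℝ} (hq : 1 ≤ q) {s : Set X} (hs : MeasurableSet s)
    {f₁ f₂ f₃ : X → ℝ≥0∞} (h₁ : Measurable f₁) (h₂ : Measurable f₂) (h₃ : Measurable f₃) :
    (∫⁻ x, (f₁ x + f₂ x + f₃ x) ^ q ∂μ) ^ (1 / q) ≤
      (∫⁻ x, f₁ x ^ q ∂μ + ∫⁻ x, f₂ x ^ q ∂μ) ^ (1 / q) +
        ((∫⁻ x in sᶜ, f₁ x ^ q ∂μ) ^ (1 / q) + (∫⁻ x in s, f₂ x ^ q ∂μ) ^ (1 / q)) +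
        (∫⁻ x, f₃ x ^ q ∂μ) ^ (1 / q) := by
  have hq0 : 0 < q := by linarith
  have hdiag : ∫⁻ x, (s.indicator f₁ + sᶜ.indicator f₂) x ^ q ∂μ ≤
      ∫⁻ x, f₁ x ^ q ∂μ + ∫⁻ x, f₂ x ^ q ∂μ := by
    rw [← lintegral_add_left (by fun_prop)]
    refine lintegral_mono fun x ↦ ?_
    by_cases hx : x ∈ s <;> simp [hx]
  have hsplit (x : X) : f₁ x + f₂ x + f₃ x = ((s.indicator f₁ + sᶜ.indicator f₂) +
      (sᶜ.indicator f₁ + s.indicator f₂) + f₃) x := by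
    by_cases hx : x ∈ s <;> simp [hx, add_comm]
  have hm₁ : Measurable (s.indicator f₁ + sᶜ.indicator f₂) :=
    (h₁.indicator hs).add (h₂.indicator hs.compl)
  have hm₂ : Measurable (sᶜ.indicator f₁ + s.indicator f₂) :=
    (h₁.indicator hs.compl).add (h₂.indicator hs)
  simp only [hsplit]
  grw [ENNReal.lintegral_Lp_add_le (hm₁.add hm₂).aemeasurable h₃.aemeasurable hq,
    ENNReal.lintegral_Lp_add_le hm₁.aemeasurable hm₂.aemeasurable hq,
    ENNReal.lintegral_Lp_add_le (h₁.indicator hs.compl).aemeasurable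
      (h₂.indicator hs).aemeasurable hq, hdiag, lintegral_indicator_rpow hq0 hs,
    lintegral_indicator_rpow hq0 hs.compl]

variable {n : ℕ} {p p' q lam α β : ℝ} {C : ℝ≥0∞}

lemma fracInt_add {G G' : Hn n → ℝ≥0∞} (hG : Measurable G) (u : Hn n) :
    fracInt lam (G + G') u = fracInt lam G u + fracInt lam G' u := by
  simp only [fracInt, Pi.add_apply, add_mul]
  exact lintegral_add_left (measurable_mul_Hdist_rpow hG u) _

lemma fracIntNorm_rpow (hq : 0 < q) (G : Hn n → ℝ≥0∞) :
    fracIntNorm q lam α G ^ q = ∫⁻ u, (fracInt lam G u * horWeight (-α) u) ^ q := by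
  rw [fracIntNorm, ← ENNReal.rpow_mul, one_div_mul_cancel hq.ne', ENNReal.rpow_one]

lemma fracIntNorm_add_le_of_split (hq : 1 ≤ q) {s : Set (Hn n)} (hs : MeasurableSet s)
    {G₁ G₂ G₃ : Hn n → ℝ≥0∞} (h₁ : Measurable G₁) (h₂ : Measurable G₂) (h₃ : Measurable G₃) :
    fracIntNorm q lam α (G₁ + G₂ + G₃) ≤
      (fracIntNorm q lam α G₁ ^ q + fracIntNorm q lam α G₂ ^ q) ^ (1 / q) +
        ((∫⁻ u in sᶜ, (fracInt lam G₁ u * horWeight (-α) u) ^ q) ^ (1 / q) +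
          (∫⁻ u in s, (fracInt lam G₂ u * horWeight (-α) u) ^ q) ^ (1 / q)) +
        fracIntNorm q lam α G₃ := by
  have hq0 : 0 < q := by linarith
  have hm (G : Hn n → ℝ≥0∞) (hG : Measurable G) :
      Measurable fun u ↦ fracInt lam G u * horWeight (-α) u :=
    (measurable_fracInt hG).mul measurable_horWeight
  rw [fracIntNorm_rpow hq0, fracIntNorm_rpow hq0, fracIntNorm, fracIntNorm]
  simp only [fracInt_add (h₁.add h₂), fracInt_add h₁, add_mul]
  exact lintegral_rpow_add_le_of_split hq hs (hm _ h₁) (hm _ h₂) (hm _ h₃)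

lemma tendsto_ofReal_mul_rpow_neg_rpow {D σ s : ℝ} (hσ : 0 < σ) (hs : 0 < s) :
    Tendsto (fun ρ : ℝ ↦ ENNReal.ofReal (D * ρ ^ (-σ)) ^ s) atTop (nhds 0) := by
  have hdecay := ENNReal.tendsto_ofReal ((tendsto_rpow_neg_atTop hσ).const_mul D)
  simpa [hs] using hdecay.ennrpow_const s

lemma exists_nat_mul_rpow_add_add_lt {κ s : ℝ} {δ : ℝ≥0∞} (hκ : 1 < κ) (hq : 0 < q) (hs : 0 < s)
    (hδ : δ ≠ 0) (hC0 : C ≠ 0) (hCtop : C ≠ ∞) {E : ℝ → ℝ≥0∞} (hE : Tendsto E atTop (nhds 0)) :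
    ∃ k : ℕ, C * ((1 - δ) ^ (κ - 1)) ^ (1 / q) + E (k + 2) +
      C * ((k + 1 : ℕ) : ℝ≥0∞)⁻¹ ^ s < C := by
  have hlt : C * ((1 - δ) ^ (κ - 1)) ^ (1 / q) < C := by
    have hpow : ((1 - δ) ^ (κ - 1)) ^ (1 / q) < 1 :=
      ENNReal.rpow_lt_one (ENNReal.rpow_lt_one
        (ENNReal.sub_lt_self one_ne_top one_ne_zero hδ) (by linarith)) (one_div_pos.2 hq)
    simpa using ENNReal.mul_lt_mul_right hC0 hCtop hpow
  have hE' : Tendsto (fun k : ℕ ↦ E (k + 2)) atTop (nhds 0) :=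
    hE.comp (tendsto_natCast_atTop_atTop.atTop_add tendsto_const_nhds)
  have hinv : Tendsto (fun k : ℕ ↦ C * ((k + 1 : ℕ) : ℝ≥0∞)⁻¹ ^ s) atTop (nhds 0) := by
    have := ENNReal.tendsto_inv_nat_nhds_zero.comp (tendsto_add_atTop_nat 1)
    simpa [hs] using ENNReal.Tendsto.const_mul (this.ennrpow_const s) (.inr hCtop)
  have hlim := (tendsto_const_nhds (x := C * ((1 - δ) ^ (κ - 1)) ^ (1 / q))).add hE' |>.add hinv
  simp only [add_zero] at hlim
  exact (hlim.eventually_lt_const hlt).exists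

lemma fracIntNorm_le_of_annulus (hp : 0 < p) (hq : 1 ≤ q)
    (hC : ∀ G : Hn n → ℝ≥0∞, Measurable G → massMeasure p β G Set.univ ≠ ∞ →
      fracIntNorm q lam α G ≤ C * massMeasure p β G Set.univ ^ (1 / p))
    {G : Hn n → ℝ≥0∞} (hG : Measurable G) (hmass : massMeasure p β G Set.univ ≠ ∞) {r R : ℝ}
    (hrR : r ≤ R) (s : ℝ) :
    fracIntNorm q lam α G ≤
      C * (massMeasure p β G {v | Hnorm v < r} ^ (q / p) +
        massMeasure p β G {v | R ≤ Hnorm v} ^ (q / p)) ^ (1 / q) +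
      ((∫⁻ u in {u | s ≤ Hnorm u},
          (fracInt lam ({v | Hnorm v < r}.indicator G) u * horWeight (-α) u) ^ q) ^ (1 / q) +
        (∫⁻ u in {u | Hnorm u < s},
          (fracInt lam ({v | R ≤ Hnorm v}.indicator G) u * horWeight (-α) u) ^ q) ^ (1 / q)) +
      C * massMeasure p β G (Hnorm ⁻¹' Set.Ico r R) ^ (1 / p) := by
  have hq0 : 0 < q := by linarith
  have hnorm_le (S : Set (Hn n)) (hS : MeasurableSet S) :
      fracIntNorm q lam α (S.indicator G) ≤ C * massMeasure p β G S ^ (1 / p) := by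
    have hfin : massMeasure p β G S ≠ ∞ := ne_top_of_le_ne_top hmass (measure_mono S.subset_univ)
    have := hC _ (hG.indicator hS)
    rw [massMeasure_indicator hp hS] at this
    exact this hfin
  have hin := measurableSet_Hnorm_lt (n := n) r
  have hout := measurableSet_le_Hnorm (n := n) R
  have hann : MeasurableSet (Hnorm (n := n) ⁻¹' Set.Ico r R) := measurable_Hnorm measurableSet_Ico
  have hcompl : {u : Hn n | Hnorm u < s}ᶜ = {u | s ≤ Hnorm u} := by ext; simp
  have hfactor (a b : ℝ≥0∞) : ((C * a ^ (1 / p)) ^ q + (C * b ^ (1 / p)) ^ q) ^ (1 / q) =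
      C * (a ^ (q / p) + b ^ (q / p)) ^ (1 / q) := by
    rw [ENNReal.mul_rpow_of_nonneg _ _ hq0.le, ENNReal.mul_rpow_of_nonneg _ _ hq0.le, ← mul_add,
      ENNReal.mul_rpow_of_nonneg _ _ (by positivity), ← ENNReal.rpow_mul, ← ENNReal.rpow_mul,
      ← ENNReal.rpow_mul, mul_one_div_cancel hq0.ne', ENNReal.rpow_one, one_div_mul_eq_div]
  rw [← hfactor, ← hcompl]
  conv_lhs => rw [← indicator_add_indicator_add_indicator_Ico (N := Hnorm) (G := G) hrR]
  grw [fracIntNorm_add_le_of_split hq (measurableSet_Hnorm_lt s) (hG.indicator hin)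
    (hG.indicator hout) (hG.indicator hann), hnorm_le _ hin, hnorm_le _ hout, hnorm_le _ hann]

namespace SteinWeissExponents

lemma exists_fracIntNorm_le_of_annulus [NeZero n] (h : SteinWeissExponents n p p' q lam α β)
    (hq : 1 ≤ q) (hC : ∀ G : Hn n → ℝ≥0∞, Measurable G → massMeasure p β G Set.univ ≠ ∞ →
      fracIntNorm q lam α G ≤ C * massMeasure p β G Set.univ ^ (1 / p)) :
    ∃ E : ℝ → ℝ≥0∞, Tendsto E atTop (nhds 0) ∧ ∀ ρ r : ℝ, 2 ≤ ρ → 0 < r →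
      ∀ G : Hn n → ℝ≥0∞, Measurable G → massMeasure p β G Set.univ ≤ 1 →
      fracIntNorm q lam α G ≤
        C * (massMeasure p β G {v | Hnorm v < r} ^ (q / p) +
          massMeasure p β G {v | ρ ^ 2 * r ≤ Hnorm v} ^ (q / p)) ^ (1 / q) + E ρ +
        C * massMeasure p β G (Hnorm ⁻¹' Set.Ico r (ρ ^ 2 * r)) ^ (1 / p) := by
  have hp := h.holderConjugate.pos
  have hq0 : 0 < 1 / q := one_div_pos.2 h.q_pos
  obtain ⟨D₁, σ₁, hσ₁, houtside⟩ := h.exists_setLIntegral_fracInt_outside_le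
  obtain ⟨D₂, σ₂, hσ₂, hinside⟩ := h.exists_setLIntegral_fracInt_inside_le
  refine ⟨fun ρ ↦ ENNReal.ofReal (D₁ * ρ ^ (-σ₁)) ^ (1 / q) +
    ENNReal.ofReal (D₂ * ρ ^ (-σ₂)) ^ (1 / q), ?_, fun ρ r hρ hr G hG hmass ↦ ?_⟩
  · simpa using (tendsto_ofReal_mul_rpow_neg_rpow (D := D₁) hσ₁ hq0).add
      (tendsto_ofReal_mul_rpow_neg_rpow (D := D₂) hσ₂ hq0)
  have hmass_le (S : Set (Hn n)) (hS : MeasurableSet S) :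
      massMeasure p β (S.indicator G) Set.univ ≤ 1 :=
    (massMeasure_indicator hp hS).trans_le ((measure_mono S.subset_univ).trans hmass)
  have hρ1 : 1 ≤ ρ ^ 2 := one_le_pow₀ (by linarith)
  have hin := measurableSet_Hnorm_lt (n := n) r
  have hout := measurableSet_le_Hnorm (n := n) (ρ ^ 2 * r)
  have hin_zero (v : Hn n) (hv : r ≤ Hnorm v) : {v | Hnorm v < r}.indicator G v = 0 :=
    Set.indicator_of_notMem (s := {v | Hnorm v < r}) hv.not_gt G
  have hout_zero (v : Hn n) (hv : Hnorm v < ρ * (ρ * r)) :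
      {v | ρ ^ 2 * r ≤ Hnorm v}.indicator G v = 0 :=
    Set.indicator_of_notMem (s := {v | ρ ^ 2 * r ≤ Hnorm v})
      (show ¬ ρ ^ 2 * r ≤ Hnorm v by rwa [sq, mul_assoc, not_le]) G
  grw [fracIntNorm_le_of_annulus hp hq hC hG (ne_top_of_le_ne_top one_ne_top hmass)
      (le_mul_of_one_le_left hr.le hρ1) (ρ * r),
    houtside ρ r hρ hr _ (hG.indicator hin) (hmass_le _ hin) hin_zero,
    hinside ρ (ρ * r) hρ (by positivity) _ (hG.indicator hout) (hmass_le _ hout) hout_zero]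

/-- A pigeonhole over `k + 1` disjoint annuli of ratio `(k + 2) ^ 2` finds one carrying mass at
most `1 / (k + 1)`; splitting there, the two remaining parts decouple. -/
lemma exists_fracIntNorm_le_lt_of_le_mass [NeZero n] (h : SteinWeissExponents n p p' q lam α β)
    (hpq : p < q) (hC : ∀ G : Hn n → ℝ≥0∞, Measurable G → massMeasure p β G Set.univ ≠ ∞ →
      fracIntNorm q lam α G ≤ C * massMeasure p β G Set.univ ^ (1 / p))
    (hC0 : C ≠ 0) (hCtop : C ≠ ∞) {δ : ℝ≥0∞} (hδ : δ ≠ 0) :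
    ∃ R : ℝ, ∃ c < C, ∀ G : Hn n → ℝ≥0∞, Measurable G →
      massMeasure p β G Set.univ ≤ 1 → δ ≤ massMeasure p β G {v | Hnorm v < 1} →
      δ ≤ massMeasure p β G {v | R ≤ Hnorm v} → fracIntNorm q lam α G ≤ c := by
  have hp := h.holderConjugate.pos
  have hq := h.q_pos
  have hκ : 1 < q / p := (one_lt_div hp).2 hpq
  obtain ⟨E, hE, hannulus⟩ :=
    h.exists_fracIntNorm_le_of_annulus (h.holderConjugate.lt.trans hpq).le hC
  obtain ⟨k, hk⟩ := exists_nat_mul_rpow_add_add_lt hκ hq (one_div_pos.2 hp) hδ hC0 hCtop hE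
  set ρ : ℝ := k + 2 with hρ
  have hρ2 : 2 ≤ ρ := by simp [hρ]
  have hρ1 : 1 ≤ ρ ^ 2 := one_le_pow₀ (by linarith)
  have hmono : Monotone fun m : ℕ ↦ (ρ ^ 2) ^ m := pow_right_mono₀ hρ1
  refine ⟨(ρ ^ 2) ^ (k + 1), _, hk, fun G hG hmass hin hout ↦ ?_⟩
  obtain ⟨m, hm, hsmall⟩ := exists_lt_measure_le_inv_of_pairwise_disjoint hmass
    (s := fun m ↦ Hnorm ⁻¹' Set.Ico ((ρ ^ 2) ^ m) ((ρ ^ 2) ^ (m + 1)))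
    (fun m ↦ measurable_Hnorm measurableSet_Ico)
    (fun i j hij ↦ (hmono.pairwise_disjoint_on_Ico_succ hij).preimage _) k.succ_ne_zero
  set r := (ρ ^ 2) ^ m
  have hr1 : 1 ≤ r := one_le_pow₀ hρ1
  have hrR : ρ ^ 2 * r ≤ (ρ ^ 2) ^ (k + 1) := (pow_succ' _ m).symm.trans_le (hmono hm)
  have hdisj : Disjoint {v : Hn n | Hnorm v < r} {v | ρ ^ 2 * r ≤ Hnorm v} := by
    refine Set.disjoint_left.2 fun v (hv : Hnorm v < r) (hv' : ρ ^ 2 * r ≤ Hnorm v) ↦ ?_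
    exact (hv.trans_le (le_mul_of_one_le_left (by linarith) hρ1)).not_ge hv'
  have hsum := (measure_union hdisj (measurableSet_le_Hnorm _)).ge.trans
    ((measure_mono (Set.subset_univ _)).trans hmass)
  grw [hannulus ρ r hρ2 (by linarith) G hG hmass, rpow_add_rpow_le_one_sub_rpow hκ.le hsum
    (hin.trans (measure_mono fun v (hv : Hnorm v < 1) ↦ hv.trans_le hr1))
    (hout.trans (measure_mono fun v hv ↦ hrR.trans hv)), ← pow_succ', hsmall]

end SteinWeissExponents
end Concentration

/-! ### Tightness and weak-* limits -/

section WeakLimit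

variable {X ι : Type*} [MeasurableSpace X]

lemma tendsto_measure_setOf_le_atTop {ν : Measure X} [IsFiniteMeasure ν] {N : X → ℝ}
    (hN : Measurable N) : Tendsto (fun R ↦ ν {x | R ≤ N x}) atTop (nhds 0) := by
  have hempty : ⋂ R : ℝ, {x | R ≤ N x} = ∅ := by
    refine Set.iInter_eq_empty_iff.2 fun x ↦ ⟨N x + 1, ?_⟩
    simp
  have hlim := tendsto_measure_iInter_atTop (μ := ν) (s := fun R : ℝ ↦ {x | R ≤ N x})
    (fun R ↦ (measurableSet_le measurable_const hN).nullMeasurableSet)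
    (fun R S hRS x hx ↦ hRS.trans hx) ⟨0, measure_ne_top _ _⟩
  rwa [hempty, measure_empty] at hlim

lemma exists_forall_measure_setOf_le_le_of_eventually {ν : ℕ → Measure X}
    [∀ i, IsFiniteMeasure (ν i)] {N : X → ℝ} (hN : Measurable N) {ε : ℝ≥0∞} (hε : ε ≠ 0) {R₀ : ℝ}
    (hev : ∀ᶠ i in atTop, ν i {x | R₀ ≤ N x} ≤ ε) :
    ∃ R > 0, ∀ i, ν i {x | R ≤ N x} ≤ ε := by
  obtain ⟨i₀, hi₀⟩ := eventually_atTop.1 hev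
  have hfirst : ∀ᶠ R in atTop, ∀ i ∈ Finset.range i₀, ν i {x | R ≤ N x} ≤ ε :=
    (Finset.eventually_all _).2 fun i _ ↦
      (tendsto_measure_setOf_le_atTop hN).eventually_le_const hε.bot_lt
  obtain ⟨R, hR, hR₀, hpos⟩ :=
    (hfirst.and ((eventually_ge_atTop R₀).and (eventually_gt_atTop 0))).exists
  refine ⟨R, hpos, fun i ↦ ?_⟩
  obtain hi | hi := lt_or_ge i i₀
  · exact hR i (Finset.mem_range.2 hi)
  · exact (measure_mono fun x hx ↦ hR₀.trans hx).trans (hi₀ i hi)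

lemma measure_le_ofReal_integral {μ : Measure X} {f : X → ℝ} (h0 : ∀ x, 0 ≤ f x)
    (hf : Integrable f μ) {K : Set X} (hK : Set.EqOn f 1 K) :
    μ K ≤ ENNReal.ofReal (∫ x, f x ∂μ) := by
  rw [ofReal_integral_eq_lintegral_ofReal hf (.of_forall h0)]
  calc μ K ≤ μ {x | 1 ≤ ENNReal.ofReal (f x)} := measure_mono fun x hx ↦ by simp [hK hx]
    _ ≤ ∫⁻ x, ENNReal.ofReal (f x) ∂μ := by
        simpa using mul_meas_ge_le_lintegral₀ hf.aemeasurable.ennreal_ofReal 1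

variable [TopologicalSpace X] [OpensMeasurableSpace X] {μ : Measure X} {f : X → ℝ}

lemma ofReal_integral_le_measure_univ (h0 : ∀ x, 0 ≤ f x) (h1 : ∀ x, f x ≤ 1)
    (hf : Continuous f) : ENNReal.ofReal (∫ x, f x ∂μ) ≤ μ Set.univ := by
  rw [integral_eq_lintegral_of_nonneg_ae (.of_forall h0) hf.measurable.aestronglyMeasurable]
  calc _ ≤ ∫⁻ x, ENNReal.ofReal (f x) ∂μ := ENNReal.ofReal_toReal_le
    _ ≤ ∫⁻ _, 1 ∂μ := lintegral_mono fun x ↦ ENNReal.ofReal_le_one.2 (h1 x)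
    _ = μ Set.univ := lintegral_one

variable {l : Filter ι} [NeBot l] {ν : ι → Measure X} [∀ i, IsProbabilityMeasure (ν i)]

lemma le_integral_of_tendsto_of_eqOn_one (h0 : ∀ x, 0 ≤ f x) (h1 : ∀ x, f x ≤ 1)
    (hf : Continuous f) (hlim : Tendsto (fun i ↦ ∫ x, f x ∂ν i) l (nhds (∫ x, f x ∂μ)))
    {K : Set X} (hK : Set.EqOn f 1 K) {ε : ℝ≥0∞} (hνK : ∀ i, ν i Kᶜ ≤ ε) :
    1 - ε ≤ ENNReal.ofReal (∫ x, f x ∂μ) := by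
  refine ge_of_tendsto' (ENNReal.tendsto_ofReal hlim) fun i ↦ ?_
  have hint : Integrable f (ν i) := .of_bound hf.measurable.aestronglyMeasurable 1
    (.of_forall fun x ↦ by rw [Real.norm_of_nonneg (h0 x)]; exact h1 x)
  refine tsub_le_iff_right.2 ?_
  calc (1 : ℝ≥0∞) = ν i (K ∪ Kᶜ) := by rw [Set.union_compl_self, measure_univ]
    _ ≤ ν i K + ν i Kᶜ := measure_union_le _ _
    _ ≤ _ := add_le_add (measure_le_ofReal_integral h0 hint hK) (hνK i)

lemma measure_univ_eq_one_of_isTightMeasureSet_of_tendsto_integral [RegularSpace X]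
    [LocallyCompactSpace X] [SigmaCompactSpace X] (htight : IsTightMeasureSet (Set.range ν))
    (hlim : ∀ f : X → ℝ, Continuous f → HasCompactSupport f →
      Tendsto (fun i ↦ ∫ x, f x ∂ν i) l (nhds (∫ x, f x ∂μ))) :
    μ Set.univ = 1 := by
  rw [isTightMeasureSet_iff_exists_isCompact_measure_compl_le] at htight
  simp only [Set.forall_mem_range] at htight
  have hcutoff (K : Set X) (hK : IsCompact K) : ∃ f : X → ℝ, Continuous f ∧ HasCompactSupport f ∧
      (∀ x, 0 ≤ f x) ∧ (∀ x, f x ≤ 1) ∧ Set.EqOn f 1 K := by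
    obtain ⟨f, hfK, -, hsupp, hf01⟩ :=
      exists_continuous_one_zero_of_isCompact hK isClosed_empty (Set.disjoint_empty K)
    exact ⟨f, f.continuous, hsupp, fun x ↦ (hf01 x).1, fun x ↦ (hf01 x).2, hfK⟩
  refine le_antisymm ?_ (ENNReal.le_of_forall_pos_le_add fun ε hε _ ↦ ?_)
  · obtain ⟨K₀, hK₀, hνK₀⟩ := htight 2⁻¹ (by simp)
    have hcompact (m : ℕ) : μ (compactCovering X m) ≤ 1 := by
      obtain ⟨f, hf, hsupp, h0, h1, hfK⟩ :=
        hcutoff _ ((isCompact_compactCovering X m).union hK₀)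
      have hint : Integrable f μ := by
        by_contra hnot -- then `∫ f ∂μ` has the junk value `0`
        have := le_integral_of_tendsto_of_eqOn_one h0 h1 hf (hlim f hf hsupp)
          (hfK.mono Set.subset_union_right) hνK₀
        simp [integral_undef hnot] at this
      have hle : ∫ x, f x ∂μ ≤ 1 := le_of_tendsto' (hlim f hf hsupp) fun i ↦
        ENNReal.ofReal_le_one.1
          ((ofReal_integral_le_measure_univ h0 h1 hf).trans_eq measure_univ)
      exact (measure_le_ofReal_integral h0 hint (hfK.mono Set.subset_union_left)).trans
        (ENNReal.ofReal_le_one.2 hle)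
    rw [← iUnion_compactCovering X,
      Monotone.measure_iUnion fun _ _ hij ↦ compactCovering_subset X hij]
    exact iSup_le hcompact
  · obtain ⟨K, hK, hνK⟩ := htight ε (by simpa using hε)
    obtain ⟨f, hf, hsupp, h0, h1, hfK⟩ := hcutoff K hK
    exact tsub_le_iff_right.1 ((le_integral_of_tendsto_of_eqOn_one h0 h1 hf
      (hlim f hf hsupp) hfK hνK).trans (ofReal_integral_le_measure_univ h0 h1 hf))

end WeakLimit

section Main

variable {n : ℕ} {p p' q lam α β : ℝ}

lemma norm_le_Hnorm_add_Hnorm_sq (v : Hn n) : ‖v‖ ≤ Hnorm v + Hnorm v ^ 2 := by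
  have hfst := (norm_le_znorm v.1).trans (znorm_le_Hnorm v)
  have hsnd := abs_snd_le_Hnorm_sq v
  refine max_le ?_ ?_
  · nlinarith
  · linarith [Real.norm_eq_abs v.2, Hnorm_nonneg v]

lemma isTightMeasureSet_of_forall_measure_le_Hnorm {S : Set (Measure (Hn n))}
    (hS : ∀ ε : ℝ≥0∞, ε ≠ 0 → ∃ R : ℝ, ∀ ν ∈ S, ν {v | R ≤ Hnorm v} ≤ ε) :
    IsTightMeasureSet S := by
  refine isTightMeasureSet_iff_exists_isCompact_measure_compl_le.2 fun ε hε ↦ ?_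
  obtain ⟨R, hR⟩ := hS ε hε.ne'
  refine ⟨_, isCompact_closedBall 0 (R + R ^ 2), fun ν hν ↦ (measure_mono fun v hv ↦ ?_).trans
    (hR ν hν)⟩
  by_contra hlt
  replace hlt : Hnorm v < R := not_le.1 hlt
  refine hv (mem_closedBall_zero_iff.2 ((norm_le_Hnorm_add_Hnorm_sq v).trans ?_))
  have := Hnorm_nonneg v
  gcongr

namespace SteinWeissExponents

lemma of_conjugate {q' Q : ℝ} (hQ : Q = 2 * n + 2) (hp : 1 < p) (hpq : p < q)
    (hq : 1 / q + 1 / q' = 1) (hp' : 1 / p + 1 / p' = 1) (hβ : β < 2 * n / p')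
    (hα : α < 2 * n / q) (hbal : 1 / p + 1 / q' + (lam + α + β) / Q = 2) :
    SteinWeissExponents n p p' q lam α β where
  holderConjugate := Real.holderConjugate_iff.2 ⟨hp, by simpa using hp'⟩
  q_pos := by linarith
  α_lt := hα
  β_lt := hβ
  balance := by
    have hQ0 : Q ≠ 0 := by rw [hQ]; positivity
    rw [← hQ, mul_comm, ← div_eq_iff hQ0]
    linarith

lemma exists_forall_massMeasure_le_of_tendsto [NeZero n]
    (h : SteinWeissExponents n p p' q lam α β) (hαβ : 0 ≤ α + β) (hpq : p < q)
    {G : ℕ → Hn n → ℝ≥0∞} (hG : ∀ i, Measurable (G i))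
    (hmass : ∀ i, massMeasure p β (G i) Set.univ = 1)
    (hmax : Tendsto (fun i ↦ fracIntNorm q lam α (G i)) atTop
      (nhds (SWbestConstHorizontal n p q lam α β)))
    {δ : ℝ≥0∞} (hδ : δ ≠ 0) (hball : ∀ i, δ ≤ massMeasure p β (G i) {v | Hnorm v < 1})
    {ε : ℝ≥0∞} (hε : ε ≠ 0) :
    ∃ R > 0, ∀ i, massMeasure p β (G i) {v | R ≤ Hnorm v} ≤ ε := by
  have (i : ℕ) : IsProbabilityMeasure (massMeasure p β (G i)) := ⟨hmass i⟩
  obtain ⟨R, c, hc, hR⟩ := h.exists_fracIntNorm_le_lt_of_le_mass hpq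
    (fun _ ↦ h.fracIntNorm_le_SWbestConst_mul hαβ hpq)
    (h.SWbestConst_ne_zero hαβ hpq (hG 0) (hmass 0)) (h.SWbestConst_ne_top hαβ hpq)
    (δ := min δ ε) (by simp [hδ, hε])
  refine exists_forall_measure_setOf_le_le_of_eventually (R₀ := R) measurable_Hnorm hε ?_
  filter_upwards [hmax.eventually_const_lt hc] with i hi
  by_contra! hlt
  exact (hR (G i) (hG i) (hmass i).le ((min_le_left _ _).trans (hball i))
    ((min_le_right _ _).trans hlt.le)).not_gt hi

end SteinWeissExponents

theorem maximizing_sequence_compactness_horizontal_general [NeZero n]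
    (h : SteinWeissExponents n p p' q lam α β) (hαβ : 0 ≤ α + β) (hpq : p < q)
    {g : ℕ → Hn n → ℝ} (hmeas : ∀ i, Measurable (g i)) (hpos : ∀ i v, 0 ≤ g i v)
    (hnorm : ∀ i, eLpNorm (fun v ↦ g i v * znorm v.1 ^ β) (ENNReal.ofReal p) volume = 1)
    (hmax : Tendsto
      (fun i ↦ eLpNorm (fun u ↦ Ilam lam (g i) u * znorm u.1 ^ (-α)) (ENNReal.ofReal q) volume)
      atTop (nhds (SWbestConstHorizontal n p q lam α β)))
    {δ : ℝ≥0∞} (hδ : δ ≠ 0) (hball : ∀ i, δ ≤ muWDz p β (g i) (Hball 0 1)) :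
    (∀ ε : ℝ, 0 < ε → ∃ R : ℝ, 0 < R ∧
      ∀ i, 1 - ENNReal.ofReal ε ≤ muWDz p β (g i) (Hball 0 R)) ∧
    ∀ {ι : Type*} {l : Filter ι} [NeBot l] (φ : ι → ℕ) (μ : Measure (Hn n)),
      (∀ f : Hn n → ℝ, Continuous f → HasCompactSupport f →
        Tendsto (fun i ↦ ∫ u, f u ∂muWDz p β (g (φ i))) l (nhds (∫ u, f u ∂μ))) →
      μ Set.univ = 1 := by
  have hp := h.holderConjugate.pos
  simp only [fun i ↦ eLpNorm_mul_znorm_rpow_eq_one_iff (β := β) hp (hpos i)] at hnorm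
  simp only [fun i ↦ h.eLpNorm_eq_fracIntNorm hαβ hpq (hmeas i) (hpos i) (hnorm i)] at hmax
  simp only [fun i ↦ muWDz_eq_massMeasure (β := β) hp.le (hpos i), Hball_zero_eq] at hball ⊢
  have (i : ℕ) : IsProbabilityMeasure (massMeasure p β fun v ↦ ENNReal.ofReal (g i v)) :=
    ⟨hnorm i⟩
  have htight (ε : ℝ≥0∞) (hε : ε ≠ 0) := h.exists_forall_massMeasure_le_of_tendsto hαβ hpq
    (fun i ↦ (hmeas i).ennreal_ofReal) hnorm hmax hδ hball hε
  refine ⟨fun ε hε ↦ ?_, fun φ μ hlim ↦ ?_⟩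
  · obtain ⟨R, hR0, hR⟩ := htight (ENNReal.ofReal ε) (by simpa using hε)
    refine ⟨R, hR0, fun i ↦ ?_⟩
    have hcompl : {v : Hn n | Hnorm v < R} = {v | R ≤ Hnorm v}ᶜ := by ext; simp
    rw [hcompl, prob_compl_eq_one_sub (measurableSet_le_Hnorm R)]
    exact tsub_le_tsub_left (hR i) 1
  · refine measure_univ_eq_one_of_isTightMeasureSet_of_tendsto_integral
      (isTightMeasureSet_of_forall_measure_le_Hnorm fun ε hε ↦ ?_) hlim
    obtain ⟨R, -, hR⟩ := htight ε hε
    exact ⟨R, Set.forall_mem_range.2 fun i ↦ hR (φ i)⟩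

end Main

/-- **Compactness for a normalized maximizing sequence of the horizontal-weight Stein–Weiss
inequality** (Lemma 3.2): the compactness alternative holds for `μ_i = |g_i|^p|z'|^{βp} dv`,
and any weak-* limit `μ` of a subsequence has total mass `1`. -/
theorem maximizing_sequence_compactness_horizontal
    (n : ℕ) (hn : 1 ≤ n) (Q p p' q q' lam α β : ℝ) (hQ : Q = 2 * n + 2)
    (hp : 1 < p) (hq' : 1 < q')
    (hq : 1 / q + 1 / q' = 1) (hp' : 1 / p + 1 / p' = 1)
    (hlam0 : 0 < lam) (hlamQ : lam < Q)
    (hab : 0 ≤ α + β) (habQ : lam + α + β ≤ Q)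
    (hβ : β < 2 * n / p') (hα : α < 2 * n / q)
    (hbal : 1 / p + 1 / q' + (lam + α + β) / Q = 2)
    (hpq : p < q)
    (g : ℕ → Hn n → ℝ)
    (hmeas : ∀ i, Measurable (g i)) (hpos : ∀ i v, 0 ≤ g i v)
    (hnorm : ∀ i, eLpNorm (fun v => g i v * znorm v.1 ^ β) (ENNReal.ofReal p) volume = 1)
    (hmax : Tendsto
      (fun i => eLpNorm (fun u => Ilam lam (g i) u * znorm u.1 ^ (-α))
        (ENNReal.ofReal q) volume) atTop (nhds (SWbestConstHorizontal n p q lam α β)))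
    (hhalf : ∀ i, muWDz p β (g i) (Hball (0 : Hn n) 1) = 1 / 2)
    (hsup : ∀ i, muWDz p β (g i) (Hball (0 : Hn n) 1) =
      ⨆ t : ℝ, muWDz p β (g i) (Hball ((0 : Fin n → ℂ), t) 1)) :
    (∃ v : ℕ → Hn n, ∀ ε : ℝ, 0 < ε → ∃ R : ℝ, 0 < R ∧
      ∀ i, 1 - ENNReal.ofReal ε ≤ muWDz p β (g i) (Hball (v i) R)) ∧
    (∀ φ : ℕ → ℕ, StrictMono φ → ∀ μ : Measure (Hn n),
      (∀ f : Hn n → ℝ, Continuous f → HasCompactSupport f →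
        Tendsto (fun i => ∫ u, f u ∂ muWDz p β (g (φ i))) atTop (nhds (∫ u, f u ∂ μ))) →
      μ Set.univ = 1) := by
  have : NeZero n := ⟨by lia⟩
  obtain ⟨hball, hlimit⟩ := maximizing_sequence_compactness_horizontal_general
    (.of_conjugate hQ hp hpq hq hp' hβ hα hbal) hab hpq hmeas hpos hnorm hmax (by simp)
    fun i ↦ (hhalf i).ge
  exact ⟨⟨fun _ ↦ 0, hball⟩, fun φ _ ↦ hlimit φ⟩
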